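/- Let m ≥ 2, λ = (m−2)/2, and let M_ℓ be a Cl_{0,m}⊗ℂ-valued homogeneous polynomial of degree ℓ with ∂_x M_ℓ = 0 (a spherical monogenic of degree ℓ). Let f(x) = f₀(|x|) M_ℓ(x) and g(x) = f₀(|x|) x M_ℓ(x), where f₀ : [0,∞) → ℝ is such that f ∈ S(ℝ^m)⊗Cl_{0,m}. Then, with η = y/|y|, r = |x|, z = r|y|, the Clifford–Fourier transform F_− h(y) = (2π)^{−m/2}∫_{ℝ^m} K_−(x,y)h(x)dx satisfies: F_− f(y) = (−1)^ℓ M_ℓ(η) ∫₀^∞ r^{m+ℓ−1} f₀(r) z^{−λ} J_{ℓ+λ}(z) dr, and F_− g(y) = −i^m η M_ℓ(η) ∫₀^∞ r^{m+ℓ} f₀(r) z^{−λ} J_{ℓ+1+λ}(z) dr. -/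

import Mathlib

open scoped BigOperators
open MeasureTheory

noncomputable section

namespace CliffordFourier

/-- Concrete model of the complexified Clifford algebra `Cl_{0,m} ⊗ ℂ`:
an element is the family of its complex coefficients on the canonical basis
`e_S = e_{i₁} ⋯ e_{i_k}` (for `S = {i₁ < … < i_k} ⊆ {0,…,m-1}`). -/
def Cl (m : ℕ) : Type := Finset (Fin m) → ℂ

variable {m : ℕ}

instance : NormedAddCommGroup (Cl m) :=
  inferInstanceAs (NormedAddCommGroup (Finset (Fin m) → ℂ))
instance : NormedSpace ℝ (Cl m) :=
  inferInstanceAs (NormedSpace ℝ (Finset (Fin m) → ℂ))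
instance : Module ℂ (Cl m) := inferInstanceAs (Module ℂ (Finset (Fin m) → ℂ))
instance : CompleteSpace (Cl m) := inferInstanceAs (CompleteSpace (Finset (Fin m) → ℂ))

/-- The coefficient of `a` on the basis element `e_S`. -/
def coeff (a : Cl m) : Finset (Fin m) → ℂ := a

/-- Build an element of the Clifford algebra from its coefficients. -/
def ofCoeff (f : Finset (Fin m) → ℂ) : Cl m := f

/-- `1 = e_∅`. -/
instance : One (Cl m) := ⟨ofCoeff fun S => if S = (∅ : Finset (Fin m)) then 1 else 0⟩

/-- Clifford multiplication, determined by the relations `e_i e_j = - e_j e_i` (`i ≠ j`)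
and `e_i² = -1`; on basis elements it is given by
`e_T · e_U = (-1)^{#{(t,u) ∈ T×U : u < t}} · (-1)^{#(T∩U)} · e_{T Δ U}`. -/
instance : Mul (Cl m) :=
  ⟨fun a b => ofCoeff fun S => ∑ T : Finset (Fin m),
    ((-1 : ℂ) ^ ((((T ×ˢ (symmDiff T S)).filter fun p : Fin m × Fin m => p.2 < p.1).card)
        + (T ∩ (symmDiff T S)).card))
      * coeff a T * coeff b (symmDiff T S)⟩

/-- The generator `e_i`. -/
def e (m : ℕ) (i : Fin m) : Cl m := ofCoeff fun S => if S = {i} then 1 else 0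

/-- The embedding of a vector `x ∈ ℝ^m` as `x = Σ_i x_i e_i` in the Clifford algebra. -/
def vec (m : ℕ) (x : Fin m → ℝ) : Cl m := ∑ i : Fin m, (x i : ℂ) • e m i

/-- The Euclidean inner product `⟨x,y⟩ = Σ_i x_i y_i`. -/
def ip (x y : Fin m → ℝ) : ℝ := ∑ i, x i * y i

/-- The Euclidean norm `|x|`. -/
def nrm (x : Fin m → ℝ) : ℝ := Real.sqrt (ip x x)

/-- The wedge product `x∧y = Σ_{j<k} e_j e_k (x_j y_k - x_k y_j)`. -/
def wedge (m : ℕ) (x y : Fin m → ℝ) : Cl m :=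
  ∑ j : Fin m, ∑ k : Fin m,
    if j < k then ((x j * y k - x k * y j : ℝ) : ℂ) • (e m j * e m k) else 0

/-- Complex conjugation of the coefficients. -/
def cconj (a : Cl m) : Cl m := ofCoeff fun S => starRingEnd ℂ (coeff a S)

/-- The partial derivative `∂_{x_i}` of a Clifford-algebra-valued function. -/
def pder (i : Fin m) (f : (Fin m → ℝ) → Cl m) : (Fin m → ℝ) → Cl m :=
  fun x => fderiv ℝ f x (Pi.single i 1)

/-- The Dirac operator `∂_x = Σ_i e_i ∂_{x_i}`. -/
def dirac (f : (Fin m → ℝ) → Cl m) : (Fin m → ℝ) → Cl m :=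
  fun x => ∑ i : Fin m, e m i * pder i f x

/-- The Euler operator `E = Σ_i x_i ∂_{x_i}`. -/
def euler (f : (Fin m → ℝ) → Cl m) : (Fin m → ℝ) → Cl m :=
  fun x => ∑ i : Fin m, x i • pder i f x

/-- The Laplacian `Δ = Σ_i ∂_{x_i}²`. -/
def lapl (f : (Fin m → ℝ) → Cl m) : (Fin m → ℝ) → Cl m :=
  fun x => ∑ i : Fin m, pder i (pder i f) x

/-- The Gegenbauer polynomial `C_k^λ(w)`, defined through the standard three-term
recurrence, equivalent to the generating function `(1-2wt+t²)^{-λ} = Σ_k C_k^λ(w) t^k`. -/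
def geg (lam : ℝ) : ℕ → ℝ → ℝ
  | 0, _ => 1
  | 1, w => 2 * lam * w
  | (k+2), w => (2 * ((k : ℝ) + 1 + lam) * w * geg lam (k+1) w
      - ((k : ℝ) + 2 * lam) * geg lam k w) / ((k : ℝ) + 2)

/-- The Bessel function of the first kind
`J_a(z) = Σ_{j≥0} (-1)^j (z/2)^{2j+a} / (j! Γ(j+a+1))`. -/
def besselJ (a z : ℝ) : ℝ :=
  ∑' j : ℕ, ((-1 : ℝ)^j * (z/2) ^ (2*(j:ℝ) + a)) / (j.factorial * Real.Gamma ((j : ℝ) + a + 1))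

/-- The entire function `J̃_a(t) = t^{-a} J_a(t) = Σ_{j≥0} (-1)^j (t/2)^{2j} / (j! Γ(j+a+1) 2^a)`
(for `t > 0` this is literally `t^{-a} J_a(t)`). -/
def besselJt (a t : ℝ) : ℝ :=
  ∑' j : ℕ, ((-1 : ℝ)^j * (t/2) ^ (2*j)) / (j.factorial * Real.Gamma ((j : ℝ) + a + 1) * (2:ℝ)^a)

/-- The renormalized Gegenbauer polynomial `((k+λ)/λ) C_k^λ = C_k^{λ+1} - C_{k-2}^{λ+1}`
(the right-hand side also makes sense for `λ = 0`, i.e. `m = 2`). -/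
def gegT (lam : ℝ) (k : ℕ) (w : ℝ) : ℝ :=
  geg (lam + 1) k w - (if 2 ≤ k then geg (lam + 1) (k - 2) w else 0)

/-- `A_λ(w,z) = 2^{λ-1} Γ(λ+1) Σ_{k≥0} (u + (-1)^k) z^{-λ} J_{k+λ}(z) C_k^λ(w)`, where `u = i^m`;
here written using `z^{-λ} J_{k+λ}(z) = z^k J̃_{k+λ}(z)`, which makes the formula
well defined for all `z ≥ 0` (and all `m ≥ 2`). -/
def AfunR (u : ℂ) (lam w z : ℝ) : ℂ :=
  (((2:ℝ)^(lam - 1) * Real.Gamma (lam + 1) : ℝ) : ℂ) *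
    ∑' k : ℕ, (u + (-1 : ℂ)^k) * ((z^k * besselJt ((k : ℝ) + lam) z * geg lam k w : ℝ) : ℂ)

/-- `B_λ(w,z) = -2^{λ-1} Γ(λ) Σ_{k≥0} (k+λ)(u - (-1)^k) z^{-λ} J_{k+λ}(z) C_k^λ(w)`;
here written using `Γ(λ)(k+λ)C_k^λ = Γ(λ+1)(C_k^{λ+1} - C_{k-2}^{λ+1})` and
`z^{-λ} J_{k+λ}(z) = z^k J̃_{k+λ}(z)`, which makes the formula well defined
for all `z ≥ 0` and all `m ≥ 2` (including `λ = 0`). -/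
def BfunR (u : ℂ) (lam w z : ℝ) : ℂ :=
  -(((2:ℝ)^(lam - 1) * Real.Gamma (lam + 1) : ℝ) : ℂ) *
    ∑' k : ℕ, (u - (-1 : ℂ)^k) * ((z^k * besselJt ((k : ℝ) + lam) z * gegT lam k w : ℝ) : ℂ)

/-- `C_λ(w,z) = -2^{λ-1} Γ(λ) Σ_{k≥0} (u + (-1)^k) z^{-λ-1} J_{k+λ}(z) (C_k^λ)'(w)`;
here written using `Γ(λ) (C_k^λ)' = 2 Γ(λ+1) C_{k-1}^{λ+1}` and
`z^{-λ-1} J_{k+λ}(z) = z^{k-1} J̃_{k+λ}(z)`, which makes the formula well defined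
for all `z ≥ 0` and all `m ≥ 2` (including `λ = 0`). -/
def CfunR (u : ℂ) (lam w z : ℝ) : ℂ :=
  -(((2:ℝ)^lam * Real.Gamma (lam + 1) : ℝ) : ℂ) *
    ∑' k : ℕ, (u + (-1 : ℂ)^k) *
      ((z^(k - 1) * besselJt ((k : ℝ) + lam) z
        * (if 1 ≤ k then geg (lam + 1) (k - 1) w else 0) : ℝ) : ℂ)

/-- The Clifford-Fourier kernel
`K_-(x,y) = A_λ(w,z) + B_λ(w,z) + (x∧y) C_λ(w,z)`
with `λ = (m-2)/2`, `z = |x||y|`, `w = ⟨x,y⟩/(|x||y|)`. -/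
def Kminus (m : ℕ) (x y : Fin m → ℝ) : Cl m :=
  (AfunR (Complex.I ^ m) (((m:ℝ) - 2)/2) (ip x y / (nrm x * nrm y)) (nrm x * nrm y)
    + BfunR (Complex.I ^ m) (((m:ℝ) - 2)/2) (ip x y / (nrm x * nrm y)) (nrm x * nrm y)) • (1 : Cl m)
  + CfunR (Complex.I ^ m) (((m:ℝ) - 2)/2) (ip x y / (nrm x * nrm y)) (nrm x * nrm y) • wedge m x y

instance instNSC : NormedSpace ℂ (Cl m) :=
  inferInstanceAs (NormedSpace ℂ (Finset (Fin m) → ℂ))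
instance instFD : FiniteDimensional ℝ (Cl m) :=
  inferInstanceAs (FiniteDimensional ℝ (Finset (Fin m) → ℂ))
instance instTower : IsScalarTower ℝ ℂ (Cl m) :=
  inferInstanceAs (IsScalarTower ℝ ℂ (Finset (Fin m) → ℂ))

/-- sign cocycle -/
def bet (T U : Finset (Fin m)) : ℂ := ∏ t ∈ T, ∏ u ∈ U, if u ≤ t then (-1 : ℂ) else 1

lemma prod_symmDiff_of_sq {f : Fin m → ℂ} (hf : ∀ i, f i * f i = 1) (A B : Finset (Fin m)) :
    ∏ i ∈ symmDiff A B, f i = (∏ i ∈ A, f i) * ∏ i ∈ B, f i := by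
  have h1 : (∏ i ∈ symmDiff A B, f i) = (∏ i ∈ A \ B, f i) * ∏ i ∈ B \ A, f i := by
    rw [symmDiff_def, Finset.sup_eq_union, Finset.prod_union]
    exact disjoint_sdiff_sdiff
  have hA : (∏ i ∈ A, f i) = (∏ i ∈ A \ B, f i) * ∏ i ∈ A ∩ B, f i := by
    rw [← Finset.prod_union (Finset.disjoint_sdiff_inter A B), Finset.sdiff_union_inter]
  have hB : (∏ i ∈ B, f i) = (∏ i ∈ B \ A, f i) * ∏ i ∈ A ∩ B, f i := by
    rw [Finset.inter_comm, ← Finset.prod_union (Finset.disjoint_sdiff_inter B A),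
      Finset.sdiff_union_inter]
  have hI : (∏ i ∈ A ∩ B, f i) * (∏ i ∈ A ∩ B, f i) = 1 := by
    rw [← Finset.prod_mul_distrib]; exact Finset.prod_eq_one fun i _ => hf i
  rw [h1, hA, hB]
  linear_combination (-(∏ i ∈ A \ B, f i) * ∏ i ∈ B \ A, f i) * hI

lemma bet_sq (T U : Finset (Fin m)) : bet T U * bet T U = 1 := by
  unfold bet
  simp_rw [← Finset.prod_mul_distrib]
  refine Finset.prod_eq_one fun t _ => Finset.prod_eq_one fun u _ => ?_
  split_ifs <;> norm_num

lemma bet_left (T T' U : Finset (Fin m)) : bet (symmDiff T T') U = bet T U * bet T' U := by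
  unfold bet
  refine prod_symmDiff_of_sq (fun t => ?_) T T'
  rw [← Finset.prod_mul_distrib]
  refine Finset.prod_eq_one fun u _ => ?_
  split_ifs <;> norm_num

lemma bet_right (T U U' : Finset (Fin m)) : bet T (symmDiff U U') = bet T U * bet T U' := by
  unfold bet
  rw [← Finset.prod_mul_distrib]
  refine Finset.prod_congr rfl fun t _ => ?_
  refine prod_symmDiff_of_sq (fun t => ?_) U U'
  split_ifs <;> norm_num

lemma bet_single (i j : Fin m) : bet {i} {j} = if j ≤ i then (-1:ℂ) else 1 := by
  simp [bet]

lemma bet_eq (T U : Finset (Fin m)) :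
    ((-1 : ℂ) ^ ((((T ×ˢ U).filter fun p : Fin m × Fin m => p.2 < p.1).card)
        + (T ∩ U).card)) = bet T U := by
  have h1 : bet T U = ∏ p ∈ T ×ˢ U, if p.2 ≤ p.1 then (-1 : ℂ) else 1 := by
    unfold bet; rw [Finset.prod_product]
  have h2 : ∀ p : Fin m × Fin m, (if p.2 ≤ p.1 then (-1 : ℂ) else 1)
      = (if p.2 < p.1 then (-1 : ℂ) else 1) * (if p.1 = p.2 then (-1 : ℂ) else 1) := by
    intro p
    rcases lt_trichotomy p.2 p.1 with h | h | h
    · simp [h, h.le, h.ne']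
    · simp [h]
    · simp [h.not_ge, h.not_gt, h.ne]
  rw [h1]
  simp_rw [h2]
  rw [Finset.prod_mul_distrib, ← Finset.prod_filter, ← Finset.prod_filter, Finset.prod_const,
    Finset.prod_const, pow_add]
  congr 2
  refine Finset.card_bij (fun a _ => (a, a)) ?_ ?_ ?_
  · intro a ha; simp at ha ⊢; exact ha
  · intro a _ b _ h; simpa using h
  · rintro ⟨a, b⟩ h
    simp at h
    obtain ⟨⟨h1, h2⟩, rfl⟩ := h
    exact ⟨a, by simp [h1, h2], rfl⟩

lemma mul_coeff (a b : Cl m) (S : Finset (Fin m)) :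
    (a * b) S = ∑ T : Finset (Fin m), bet T (symmDiff T S) * a T * b (symmDiff T S) := by
  change (∑ T : Finset (Fin m), _) = _
  simp_rw [bet_eq]
  rfl

@[ext] lemma cl_ext {a b : Cl m} (h : ∀ S, a S = b S) : a = b := funext h

@[simp] lemma add_ap (a b : Cl m) (S) : (a + b) S = a S + b S := rfl
@[simp] lemma neg_ap (a : Cl m) (S) : (-a) S = - a S := rfl
@[simp] lemma zero_ap (S) : (0 : Cl m) S = 0 := rfl
@[simp] lemma csmul_ap (c : ℂ) (a : Cl m) (S) : (c • a) S = c * a S := rfl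
@[simp] lemma rsmul_ap (c : ℝ) (a : Cl m) (S) : (c • a) S = c * a S := by
  change c • (a S) = _
  rw [Complex.real_smul]

lemma rsmul_eq (c : ℝ) (a : Cl m) : c • a = (c : ℂ) • a := by ext S; simp

lemma cl_add_mul (a b c : Cl m) : (a + b) * c = a * c + b * c := by
  ext S; simp only [mul_coeff, add_ap, ← Finset.sum_add_distrib]
  exact Finset.sum_congr rfl fun T _ => by ring
lemma cl_mul_add (a b c : Cl m) : a * (b + c) = a * b + a * c := by
  ext S; simp only [mul_coeff, add_ap, ← Finset.sum_add_distrib]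
  exact Finset.sum_congr rfl fun T _ => by ring
lemma cl_smul_mul (r : ℂ) (a b : Cl m) : (r • a) * b = r • (a * b) := by
  ext S; simp only [mul_coeff, csmul_ap, Finset.mul_sum]
  exact Finset.sum_congr rfl fun T _ => by ring
lemma cl_mul_smul (r : ℂ) (a b : Cl m) : a * (r • b) = r • (a * b) := by
  ext S; simp only [mul_coeff, csmul_ap, Finset.mul_sum]
  exact Finset.sum_congr rfl fun T _ => by ring

lemma e_ap (i : Fin m) (S) : (e m i) S = if S = {i} then 1 else 0 := rfl
lemma one_ap (S) : (1 : Cl m) S = if S = ∅ then 1 else 0 := rfl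

lemma cl_one_mul (a : Cl m) : 1 * a = a := by
  ext S
  rw [mul_coeff, Finset.sum_eq_single ∅]
  · have h : symmDiff (∅ : Finset (Fin m)) S = S := bot_symmDiff S
    simp [one_ap, bet, h]
  · intro T _ hT; simp [one_ap, hT]
  · simp

/-- multiplication as a bilinear map -/
def mulB (m : ℕ) : Cl m →ₗ[ℂ] Cl m →ₗ[ℂ] Cl m :=
  LinearMap.mk₂ ℂ (fun a b => a * b) cl_add_mul cl_smul_mul cl_mul_add cl_mul_smul

lemma mulB_ap (a b : Cl m) : mulB m a b = a * b := rfl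

lemma e_mul (i : Fin m) (a : Cl m) (S) :
    (e m i * a) S = bet {i} {i} * bet {i} S * a (symmDiff {i} S) := by
  rw [mul_coeff, Finset.sum_eq_single {i}]
  · simp [e_ap, bet_right]
  · intro T _ hT; simp [e_ap, hT]
  · simp

lemma e_e_mul (i j : Fin m) (a : Cl m) (S) :
    (e m i * (e m j * a)) S
      = bet {i} {i} * bet {i} S * (bet {j} {j} * (bet {j} {i} * bet {j} S)) *
        a (symmDiff {j} (symmDiff {i} S)) := by
  rw [e_mul, e_mul, bet_right]; ring

lemma ee_mul (i j : Fin m) (a : Cl m) : (e m i * e m j) * a = e m i * (e m j * a) := by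
  ext S
  rw [e_e_mul, mul_coeff, Finset.sum_eq_single (symmDiff {i} {j})]
  · rw [e_mul, symmDiff_symmDiff_cancel_left]
    simp only [e_ap, bet_left, bet_right]
    rw [show symmDiff (symmDiff {i} {j}) S = symmDiff {j} (symmDiff {i} S) by
      rw [symmDiff_assoc, symmDiff_left_comm]]
    have h1 := bet_sq ({i} : Finset (Fin m)) {i}
    have h2 := bet_sq ({i} : Finset (Fin m)) {j}
    simp only [if_true]
    linear_combination (bet {i} {i} * bet {i} S * (bet {j} {j} * (bet {j} {i} * bet {j} S)) *
        a (symmDiff {j} (symmDiff {i} S))) * (bet {i} {j} * bet {i} {j} * h1 + h2)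
  · intro T _ hT
    have : symmDiff {i} T ≠ {j} := by
      intro h; apply hT; rw [← h, symmDiff_symmDiff_cancel_left]
    rw [e_mul, e_ap, if_neg this]; ring
  · simp

lemma e_anti (i j : Fin m) (h : i ≠ j) (a : Cl m) :
    e m i * (e m j * a) = - (e m j * (e m i * a)) := by
  ext S
  rw [neg_ap, e_e_mul, e_e_mul, show symmDiff {j} (symmDiff {i} S) = symmDiff {i} (symmDiff {j} S) by
      rw [symmDiff_left_comm]]
  have : bet {j} {i} + bet {i} {j} = 0 := by
    rw [bet_single, bet_single]
    rcases lt_or_gt_of_ne h with h | h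
    · simp [h.le, h.not_ge]
    · simp [h.le, h.not_ge]
  linear_combination (bet {i} {i} * bet {i} S * (bet {j} {j} *  bet {j} S) *
        a (symmDiff {i} (symmDiff {j} S))) * this

lemma e_sq (i : Fin m) (a : Cl m) : e m i * (e m i * a) = - a := by
  ext S
  rw [neg_ap, e_e_mul, symmDiff_symmDiff_cancel_left]
  have h := bet_sq ({i} : Finset (Fin m)) S
  have h2 : bet {i} {i} = -1 := by simp [bet_single]
  rw [h2]
  linear_combination -(a S) * h

lemma cl_sum_mul {ι : Type*} (s : Finset ι) (f : ι → Cl m) (a : Cl m) :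
    (∑ i ∈ s, f i) * a = ∑ i ∈ s, f i * a := by
  exact map_sum ((mulB m).flip a) f s
lemma cl_mul_sum {ι : Type*} (s : Finset ι) (f : ι → Cl m) (a : Cl m) :
    a * (∑ i ∈ s, f i) = ∑ i ∈ s, a * f i := by
  exact map_sum (mulB m a) f s

lemma vec_mul (x : Fin m → ℝ) (a : Cl m) : vec m x * a = ∑ i, (x i : ℂ) • (e m i * a) := by
  simp only [vec, cl_sum_mul, cl_smul_mul]

lemma vec_vec_mul (x y : Fin m → ℝ) (a : Cl m) :
    vec m x * (vec m y * a) = ∑ i, ∑ j, ((x i * y j : ℝ) : ℂ) • (e m i * (e m j * a)) := by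
  rw [vec_mul]
  refine Finset.sum_congr rfl fun i _ => ?_
  rw [vec_mul, cl_mul_sum, Finset.smul_sum]
  refine Finset.sum_congr rfl fun j _ => ?_
  rw [cl_mul_smul, smul_smul]; push_cast; rfl

lemma sum_sum_anti {V : Type*} [AddCommGroup V] (F : Fin m → Fin m → V) :
    ∑ i, ∑ j, F i j = (∑ i, ∑ j, if i < j then F i j + F j i else 0) + ∑ i, F i i := by
  have h : ∀ i j, F i j = (if i < j then F i j else 0) + (if j < i then F i j else 0)
      + (if i = j then F i j else 0) := by
    intro i j
    rcases lt_trichotomy i j with h | h | h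
    · simp [h, h.not_gt, h.ne]
    · simp [h]
    · simp [h, h.not_gt, h.ne']
  have h2 : ∀ i j, (if i < j then F i j + F j i else 0)
     = (if i < j then F i j else 0) + (if i < j then F j i else 0) := by
    intro i j; split_ifs <;> simp
  simp_rw [h2, Finset.sum_add_distrib]
  rw [Finset.sum_congr rfl fun i _ => Finset.sum_congr rfl fun j _ => h i j]
  simp_rw [Finset.sum_add_distrib]
  congr 1
  · congr 1
    exact Finset.sum_comm
  · simp

lemma vec_vec_wedge (x y : Fin m → ℝ) (a : Cl m) :
    wedge m x y * a = - (vec m y * (vec m x * a)) - (ip x y : ℂ) • a := by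
  rw [vec_vec_mul, sum_sum_anti, wedge, cl_sum_mul]
  have hd : ∑ i, ((y i * x i : ℝ) : ℂ) • (e m i * (e m i * a)) = - ((ip x y : ℂ) • a) := by
    simp_rw [e_sq, smul_neg, Finset.sum_neg_distrib, ← Finset.sum_smul, ip]
    push_cast
    simp_rw [mul_comm]
  rw [hd, neg_add, neg_neg, add_sub_cancel_right, ← Finset.sum_neg_distrib]
  refine Finset.sum_congr rfl fun i _ => ?_
  rw [cl_sum_mul, ← Finset.sum_neg_distrib]
  refine Finset.sum_congr rfl fun j _ => ?_
  split_ifs with h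
  · rw [cl_smul_mul, ee_mul, e_anti j i h.ne']
    push_cast
    module
  · rw [neg_zero]
    exact map_zero ((mulB m).flip a)

lemma vec_sq (x : Fin m → ℝ) (a : Cl m) : vec m x * (vec m x * a) = - ((ip x x : ℂ) • a) := by
  have h := vec_vec_wedge x x a
  have h0 : wedge m x x = 0 := by
    simp only [wedge]
    refine Finset.sum_eq_zero fun i _ => Finset.sum_eq_zero fun j _ => ?_
    rw [mul_comm, sub_self]; simp
  have h1 : wedge m x x * a = 0 := by rw [h0]; exact map_zero ((mulB m).flip a)
  rw [h1] at h
  have := sub_eq_zero.mp h.symm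
  rw [← this, neg_neg]

open PowerSeries in
/-- the Gegenbauer ODE for a power series -/
def gode (mu w : ℂ) (F : PowerSeries ℂ) : Prop :=
  (1 - C (2 * w) * X + X * X) * derivative ℂ F = C (2 * mu) * (C w - X) * F

open PowerSeries in
lemma gode_coeff_succ (mu w : ℂ) (F : PowerSeries ℂ) (n : ℕ) :
    PowerSeries.coeff (n+1) ((1 - C (2 * w) * X + X * X) * derivative ℂ F
       - C (2 * mu) * (C w - X) * F) =
    (n + 2) * PowerSeries.coeff (n+2) F - 2 * (n + 1 + mu) * w * PowerSeries.coeff (n+1) F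
      + (n + 2 * mu) * PowerSeries.coeff n F := by
  have : (1 - C (2 * w) * X + X * X) * derivative ℂ F - C (2 * mu) * (C w - X) * F
     = derivative ℂ F - C (2 * w) * (X * derivative ℂ F) + X * (X * derivative ℂ F)
      - C (2 * mu * w) * F + C (2 * mu) * (X * F) := by
    simp only [map_mul]; ring
  rw [this]
  simp only [map_add, map_sub, coeff_C_mul, coeff_succ_X_mul, coeff_derivative]
  cases n with
  | zero => simp; ring
  | succ k => rw [coeff_succ_X_mul, coeff_derivative]; push_cast; ring

open PowerSeries in
lemma gode_coeff_zero (mu w : ℂ) (F : PowerSeries ℂ) :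
    PowerSeries.coeff 0 ((1 - C (2 * w) * X + X * X) * derivative ℂ F
       - C (2 * mu) * (C w - X) * F) =
    PowerSeries.coeff 1 F - 2 * mu * w * PowerSeries.coeff 0 F := by
  have : (1 - C (2 * w) * X + X * X) * derivative ℂ F - C (2 * mu) * (C w - X) * F
     = derivative ℂ F - C (2 * w) * (X * derivative ℂ F) + X * (X * derivative ℂ F)
      - C (2 * mu * w) * F + C (2 * mu) * (X * F) := by
    simp only [map_mul]; ring
  rw [this]
  simp only [map_add, map_sub, coeff_C_mul, coeff_zero_X_mul, coeff_derivative]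
  push_cast; ring

lemma geg_of_gode (mu w : ℝ) (F : PowerSeries ℂ) (h0 : PowerSeries.coeff 0 F = 1)
    (h : gode mu w F) (k : ℕ) : PowerSeries.coeff k F = (geg mu k w : ℂ) := by
  have key := sub_eq_zero.mpr h
  induction k using Nat.strong_induction_on with
  | _ k ih =>
    match k, ih with
    | 0, _ => simp [geg, h0]
    | 1, _ =>
      have := gode_coeff_zero mu w F
      rw [key, map_zero, h0] at this
      simp only [geg]; push_cast
      linear_combination -this
    | (k+2), ih =>
      have := gode_coeff_succ mu w F k
      rw [key, map_zero, ih k (by omega), ih (k+1) (by omega)] at this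
      simp only [geg]; push_cast
      have h2 : (k:ℂ) + 2 ≠ 0 := by exact_mod_cast (by omega : k + 2 ≠ 0)
      rw [eq_div_iff h2]
      linear_combination -this

lemma gode_geg (mu w : ℝ) : gode mu w (PowerSeries.mk fun k => (geg mu k w : ℂ)) := by
  refine sub_eq_zero.mp ?_
  ext n
  rw [map_zero]
  cases n with
  | zero => rw [gode_coeff_zero]; simp [geg]
  | succ n =>
    rw [gode_coeff_succ]; simp only [PowerSeries.coeff_mk, geg]; push_cast
    have h2 : (n:ℂ) + 2 ≠ 0 := by exact_mod_cast (by omega : n + 2 ≠ 0)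
    field_simp
    ring

lemma gode_mul (mu w : ℂ) (F : PowerSeries ℂ) (h : gode (mu + 1) w F) :
    gode mu w ((1 - PowerSeries.C (2 * w) * PowerSeries.X + PowerSeries.X * PowerSeries.X) * F) := by
  unfold gode at *
  set Q : PowerSeries ℂ := 1 - PowerSeries.C (2 * w) * PowerSeries.X + PowerSeries.X * PowerSeries.X with hQ
  have hd : PowerSeries.derivative ℂ Q = - PowerSeries.C 2 * (PowerSeries.C w - PowerSeries.X) := by
    have h1 : PowerSeries.derivative ℂ (1 : PowerSeries ℂ) = 0 := by
      exact Derivation.map_one_eq_zero _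
    rw [hQ, map_add, map_sub, h1, Derivation.leibniz, Derivation.leibniz, PowerSeries.derivative_C,
      PowerSeries.derivative_X]
    have : (PowerSeries.C (2:ℂ)) = 2 := map_ofNat _ 2
    simp only [map_mul, this, smul_eq_mul]; ring
  rw [Derivation.leibniz, hd]
  simp only [smul_eq_mul, map_mul, map_add, map_one] at *
  linear_combination Q * h

/-- D_{k-1} with the convention D_{-1}=0 -/
def sh1 (f : ℕ → ℝ) (k : ℕ) : ℝ := if 1 ≤ k then f (k-1) else 0
/-- D_{k-2} -/
def sh2 (f : ℕ → ℝ) (k : ℕ) : ℝ := if 2 ≤ k then f (k-2) else 0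

lemma geg_shift (lam w : ℝ) (k : ℕ) : geg lam k w = geg (lam+1) k w
    - 2 * w * sh1 (fun j => geg (lam+1) j w) k + sh2 (fun j => geg (lam+1) j w) k := by
  set F : PowerSeries ℂ := PowerSeries.mk fun k => (geg (lam+1) k w : ℂ) with hF
  have h := gode_geg (lam+1) w
  rw [← hF] at h
  push_cast at h
  have h1 := gode_mul lam w F h
  have hexp : (1 - PowerSeries.C (2 * (w:ℂ)) * PowerSeries.X + PowerSeries.X * PowerSeries.X) * F
     = F - PowerSeries.C (2 * (w:ℂ)) * (PowerSeries.X * F) + PowerSeries.X * (PowerSeries.X * F) := by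
    ring
  have h2 := geg_of_gode lam w _ (by
    rw [hexp]; simp [hF, geg]) h1 k
  rw [hexp] at h2
  have h3 : (geg lam k w : ℂ) = ((geg (lam+1) k w
    - 2 * w * sh1 (fun j => geg (lam+1) j w) k + sh2 (fun j => geg (lam+1) j w) k : ℝ) : ℂ) := by
    rw [← h2]
    simp only [map_add, map_sub, PowerSeries.coeff_C_mul]
    match k with
    | 0 => simp [sh1, sh2, hF]
    | 1 => simp [sh1, sh2, hF, PowerSeries.coeff_succ_X_mul, geg]
    | (k+2) => simp [sh1, sh2, hF, PowerSeries.coeff_succ_X_mul]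
  exact_mod_cast h3

/-- (μ)_n / n! -/
def poch (mu : ℝ) : ℕ → ℝ
  | 0 => 1
  | (n+1) => poch mu n * (n + mu) / (n + 1)

lemma poch_nonneg {mu : ℝ} (h : 0 ≤ mu) (n : ℕ) : 0 ≤ poch mu n := by
  induction n with
  | zero => simp [poch]
  | succ n ih => simp only [poch]; positivity

lemma poch_le {mu : ℝ} (h : 0 ≤ mu) (p : ℕ) (hp : mu ≤ p) (n : ℕ) : poch mu n ≤ ((n:ℝ)+1)^p := by
  induction n with
  | zero => simp [poch]
  | succ n ih =>
    simp only [poch]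
    have hb : 1 + (p:ℝ) * (1/((n:ℝ)+1)) ≤ (1 + 1/((n:ℝ)+1))^p :=
      one_add_mul_le_pow (le_trans (by norm_num) (by positivity : (0:ℝ) ≤ 1/((n:ℝ)+1))) p
    have h1 : ((n:ℝ) + mu)/(n+1) ≤ 1 + (p:ℝ) * (1/((n:ℝ)+1)) := by
      rw [div_le_iff₀ (by positivity)]; field_simp; linarith
    calc poch mu n * (n + mu) / (n + 1) = poch mu n * ((n + mu) / (n + 1)) := by ring
      _ ≤ ((n:ℝ)+1)^p * (1 + 1/((n:ℝ)+1))^p := by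
        refine mul_le_mul ih (h1.trans hb) (by positivity) (by positivity)
      _ = (((n+1:ℕ):ℝ)+1)^p := by
        rw [← mul_pow]; congr 1; push_cast; field_simp

open PowerSeries in
lemma poch_ode (mu : ℝ) (z : ℂ) :
    (1 - C z * X) * derivative ℂ (PowerSeries.mk fun n => (poch mu n : ℂ) * z^n)
      = C (mu * z) * (PowerSeries.mk fun n => (poch mu n : ℂ) * z^n) := by
  set F : PowerSeries ℂ := PowerSeries.mk fun n => (poch mu n : ℂ) * z^n with hF
  have : (1 - C z * X) * derivative ℂ F = derivative ℂ F - C z * (X * derivative ℂ F) := by ring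
  rw [this]
  ext n
  simp only [map_sub, coeff_C_mul, coeff_derivative]
  cases n with
  | zero => simp [hF, poch]
  | succ n =>
    rw [coeff_succ_X_mul, coeff_derivative]
    simp only [hF, coeff_mk, poch]
    have h2 : (n:ℂ) + 1 ≠ 0 := by exact_mod_cast (by omega : n + 1 ≠ 0)
    have h3 : (n:ℂ) + 1 + 1 ≠ 0 := by exact_mod_cast (by omega : n + 1 + 1 ≠ 0)
    push_cast
    field_simp
    ring

lemma gode_poch (mu : ℝ) (z z' w : ℂ) (h1 : z * z' = 1) (h2 : z + z' = 2 * w) :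
    gode mu w ((PowerSeries.mk fun n => (poch mu n : ℂ) * z^n) *
      (PowerSeries.mk fun n => (poch mu n : ℂ) * z'^n)) := by
  have e1 := poch_ode mu z
  have e2 := poch_ode mu z'
  set P : PowerSeries ℂ := PowerSeries.mk fun n => (poch mu n : ℂ) * z^n
  set P' : PowerSeries ℂ := PowerSeries.mk fun n => (poch mu n : ℂ) * z'^n
  unfold gode
  rw [Derivation.leibniz]
  have h1' := congrArg (PowerSeries.C (R := ℂ)) h1
  have h2' := congrArg (PowerSeries.C (R := ℂ)) h2
  have : (PowerSeries.C (2:ℂ)) = 2 := map_ofNat _ 2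
  simp only [smul_eq_mul, map_mul, map_add, map_one, this] at *
  have hf : (1 - 2 * PowerSeries.C w * PowerSeries.X + PowerSeries.X * PowerSeries.X : PowerSeries ℂ)
     = (1 - PowerSeries.C z * PowerSeries.X) * (1 - PowerSeries.C z' * PowerSeries.X) := by
    linear_combination PowerSeries.X * h2' - PowerSeries.X * PowerSeries.X * h1'
  rw [hf]
  set cm := PowerSeries.C (mu:ℂ)
  linear_combination (1 - PowerSeries.C z * PowerSeries.X) * P * e2
    + (1 - PowerSeries.C z' * PowerSeries.X) * P' * e1
    + cm * P * P' * h2' - 2 * cm * P * P' * PowerSeries.X * h1'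

lemma geg_bound (mu : ℝ) (h : 0 ≤ mu) : ∃ q : ℕ, ∀ (k : ℕ) (w : ℝ), |w| ≤ 1 →
    |geg mu k w| ≤ ((k:ℝ)+1)^q := by
  obtain ⟨p, hp⟩ := exists_nat_ge mu
  refine ⟨p + p + 1, fun k w hw => ?_⟩
  have hw' := abs_le.mp hw
  set z : ℂ := Complex.exp (Real.arccos w * Complex.I) with hz
  set z' : ℂ := Complex.exp (-(Real.arccos w * Complex.I)) with hz'
  have h1 : z * z' = 1 := by rw [hz, hz', ← Complex.exp_add]; simp
  have h2 : z + z' = 2 * w := by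
    have : (w:ℂ) = Complex.cos (Real.arccos w) := by
      rw [← Complex.ofReal_cos, Real.cos_arccos hw'.1 hw'.2]
    rw [this, Complex.cos, hz, hz', neg_mul]; ring
  have hk := geg_of_gode mu w _ (by simp [poch]) (gode_poch mu z z' w h1 h2) k
  have hzn : ‖z‖ = 1 := by rw [hz, Complex.norm_exp_ofReal_mul_I]
  have hzn' : ‖z'‖ = 1 := by
    rw [hz', ← neg_mul, ← Complex.ofReal_neg, Complex.norm_exp_ofReal_mul_I]
  rw [← Real.norm_eq_abs, ← Complex.norm_real, ← hk, PowerSeries.coeff_mul]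
  refine (norm_sum_le _ _).trans ?_
  have hterm : ∀ ij ∈ Finset.HasAntidiagonal.antidiagonal k, ‖(PowerSeries.coeff ij.1 (PowerSeries.mk fun n => (poch mu n : ℂ) * z^n)) *
      (PowerSeries.coeff ij.2 (PowerSeries.mk fun n => (poch mu n : ℂ) * z'^n))‖ ≤ ((k:ℝ)+1)^p * ((k:ℝ)+1)^p := by
    intro ij hij
    have hs := Finset.HasAntidiagonal.mem_antidiagonal.mp hij
    have l1 : ij.1 ≤ k := by omega
    have l2 : ij.2 ≤ k := by omega
    simp only [PowerSeries.coeff_mk, norm_mul, norm_pow, hzn, hzn', one_pow, mul_one,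
      Complex.norm_real, Real.norm_eq_abs, abs_of_nonneg (poch_nonneg h _)]
    refine mul_le_mul ((poch_le h p hp _).trans ?_) ((poch_le h p hp _).trans ?_) (poch_nonneg h _)
      (by positivity)
    · gcongr
    · gcongr
  refine (Finset.sum_le_card_nsmul _ _ _ hterm).trans ?_
  rw [Finset.Nat.card_antidiagonal, nsmul_eq_mul]
  push_cast
  apply le_of_eq; ring

lemma continuous_geg (mu : ℝ) (k : ℕ) : Continuous (geg mu k) := by
  induction k using Nat.strong_induction_on with
  | _ k ih =>
    match k, ih with
    | 0, _ => simp only [geg]; exact continuous_const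
    | 1, _ => simp only [geg]; fun_prop
    | (k+2), ih =>
      have h1 := ih k (by omega)
      have h2 := ih (k+1) (by omega)
      simp only [geg]
      fun_prop

lemma nrm_eq (x : Fin m → ℝ) : nrm x = ‖(WithLp.toLp 2 x : EuclideanSpace ℝ (Fin m))‖ := by
  rw [EuclideanSpace.norm_eq, nrm, ip]
  congr 1
  refine Finset.sum_congr rfl fun i _ => ?_
  simp [sq]

lemma ip_self_nonneg (x : Fin m → ℝ) : 0 ≤ ip x x :=
  Finset.sum_nonneg fun _ _ => mul_self_nonneg _

lemma nrm_sq (x : Fin m → ℝ) : nrm x ^ 2 = ip x x := Real.sq_sqrt (ip_self_nonneg x)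
lemma nrm_nonneg (x : Fin m → ℝ) : 0 ≤ nrm x := Real.sqrt_nonneg _
lemma nrm_pos {x : Fin m → ℝ} (hx : x ≠ 0) : 0 < nrm x := by
  rw [nrm_eq, norm_pos_iff]
  intro h; apply hx
  exact (WithLp.toLp_injective 2) (by simpa using h)

lemma norm_le_nrm (x : Fin m → ℝ) : ‖x‖ ≤ nrm x := by
  refine (pi_norm_le_iff_of_nonneg (nrm_nonneg x)).mpr fun i => ?_
  rw [nrm, Real.norm_eq_abs]
  apply Real.le_sqrt_of_sq_le
  rw [sq_abs, sq]
  exact Finset.single_le_sum (f := fun i => x i * x i) (fun j _ => mul_self_nonneg _) (Finset.mem_univ i)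

lemma nrm_smul (c : ℝ) (x : Fin m → ℝ) : nrm (c • x) = |c| * nrm x := by
  rw [nrm_eq, nrm_eq, WithLp.toLp_smul, norm_smul, Real.norm_eq_abs]

lemma ip_smul_left (c : ℝ) (x y : Fin m → ℝ) : ip (c • x) y = c * ip x y := by
  simp [ip, Finset.mul_sum, mul_assoc]
lemma ip_comm (x y : Fin m → ℝ) : ip x y = ip y x := by
  simp [ip, mul_comm]
lemma ip_smul_right (c : ℝ) (x y : Fin m → ℝ) : ip x (c • y) = c * ip x y := by
  rw [ip_comm, ip_smul_left, ip_comm]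
lemma ip_eq_inner (x y : Fin m → ℝ) :
    ip x y = inner ℝ (WithLp.toLp 2 x : EuclideanSpace ℝ (Fin m)) (WithLp.toLp 2 y) := by
  simp [ip, PiLp.inner_apply, mul_comm]
lemma abs_ip_le (x y : Fin m → ℝ) : |ip x y| ≤ nrm x * nrm y := by
  rw [ip_eq_inner, nrm_eq, nrm_eq]; exact abs_real_inner_le_norm _ _
lemma continuous_ip_left (y : Fin m → ℝ) : Continuous fun x => ip x y := by
  unfold ip; fun_prop
lemma continuous_nrm : Continuous (nrm : (Fin m → ℝ) → ℝ) := by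
  unfold nrm ip; fun_prop

/-- unit sphere in Euclidean space -/
abbrev Sph (m : ℕ) := Metric.sphere (0 : EuclideanSpace ℝ (Fin m)) 1
/-- surface measure -/
def sig (m : ℕ) : Measure (Sph m) := (volume : Measure (EuclideanSpace ℝ (Fin m))).toSphere
instance instFinSig : IsFiniteMeasure (sig m) := by unfold sig; infer_instance
/-- the sphere integral -/
def sint {V : Type*} [NormedAddCommGroup V] [NormedSpace ℝ V] (h : (Fin m → ℝ) → V) : V :=
  ∫ ξ : Sph m, h (WithLp.ofLp ξ.1) ∂(sig m)

lemma nrm_sph (ξ : Sph m) : nrm (WithLp.ofLp ξ.1) = 1 := by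
  rw [nrm_eq]; simp

open Set Measure in
lemma polar {V : Type*} [NormedAddCommGroup V] [NormedSpace ℝ V] (hm : 2 ≤ m)
    (φ : ℝ → ℝ) (h : (Fin m → ℝ) → V) :
    ∫ x : Fin m → ℝ, φ (nrm x) • h ((nrm x)⁻¹ • x)
      = (∫ r in Ioi (0:ℝ), r^(m-1) * φ r) • sint h := by
  have : NeZero m := ⟨by omega⟩
  have : Nontrivial (EuclideanSpace ℝ (Fin m)) := inferInstance
  have hd : Module.finrank ℝ (EuclideanSpace ℝ (Fin m)) = m := by simp
  let E := EuclideanSpace ℝ (Fin m)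
  have h0 : ∫ x : Fin m → ℝ, φ (nrm x) • h ((nrm x)⁻¹ • x)
      = ∫ v : E, φ ‖v‖ • h (WithLp.ofLp (‖v‖⁻¹ • v)) := by
    rw [← (PiLp.volume_preserving_toLp (Fin m)).integral_comp
      (MeasurableEquiv.toLp 2 (Fin m → ℝ)).measurableEmbedding]
    refine integral_congr_ae (ae_of_all _ fun x => ?_)
    simp only [nrm_eq]
    rfl
  rw [h0]
  calc ∫ v : E, φ ‖v‖ • h (WithLp.ofLp (‖v‖⁻¹ • v))
    _ = ∫ x : ({(0)}ᶜ : Set E), φ (‖x.1‖) • h (WithLp.ofLp (‖x.1‖⁻¹ • x.1)) ∂((volume : Measure E).comap (Subtype.val)) := by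
      rw [integral_subtype_comap (measurableSet_singleton _).compl
          fun x : E ↦ φ (‖x‖) • h (WithLp.ofLp (‖x‖⁻¹ • x)),
        restrict_compl_singleton]
    _ = ∫ x : Sph m × Ioi (0:ℝ), φ x.2 • h (WithLp.ofLp x.1.1)
          ∂((volume : Measure E).toSphere.prod (.volumeIoiPow (Module.finrank ℝ E - 1))) := by
      have := (volume : Measure E).measurePreserving_homeomorphUnitSphereProd.integral_comp
        (Homeomorph.measurableEmbedding _)
        (fun x : Sph m × Ioi (0:ℝ) => φ x.2 • h (WithLp.ofLp x.1.1))
      rw [← this]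
      refine integral_congr_ae (ae_of_all _ fun x => ?_)
      simp
    _ = (∫ x : Ioi (0:ℝ), φ x ∂(.volumeIoiPow (Module.finrank ℝ E - 1))) •
         (∫ ξ : Sph m, h (WithLp.ofLp ξ.1) ∂(volume : Measure E).toSphere) := by
      rw [← integral_prod_smul, ← integral_prod_swap]
      rfl
    _ = _ := by
      rw [hd]
      congr 1
      simp only [Measure.volumeIoiPow, ENNReal.ofReal]
      rw [integral_withDensity_eq_integral_smul,
        integral_subtype_comap measurableSet_Ioi fun a ↦ Real.toNNReal (a ^ (m - 1)) • φ a,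
        setIntegral_congr_fun measurableSet_Ioi fun x hx ↦ ?_]
      · rw [NNReal.smul_def, Real.coe_toNNReal _ (pow_nonneg hx.out.le _), smul_eq_mul]
      · exact (measurable_subtype_coe.pow_const _).real_toNNReal

lemma ae_ne_zero (hm : 2 ≤ m) : ∀ᵐ x : Fin m → ℝ, x ≠ 0 := by
  have : NeZero m := ⟨by omega⟩
  exact Measure.ae_ne volume 0

open Set in
lemma polar_hom {V : Type*} [NormedAddCommGroup V] [NormedSpace ℝ V] (hm : 2 ≤ m)
    (φ : ℝ → ℝ) (h : (Fin m → ℝ) → V) (d : ℕ) (hh : ∀ (c : ℝ) x, h (c • x) = c^d • h x) :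
    ∫ x : Fin m → ℝ, φ (nrm x) • h x
      = (∫ r in Ioi (0:ℝ), r^(m-1) * (φ r * r^d)) • sint h := by
  rw [← polar hm (fun r => φ r * r^d) h]
  refine integral_congr_ae ?_
  filter_upwards [ae_ne_zero hm] with x hx
  have hn := (nrm_pos hx).ne'
  rw [hh, smul_smul]
  congr 1
  rw [inv_pow, mul_assoc, mul_inv_cancel₀ (pow_ne_zero _ hn), mul_one]

/-- Gaussian -/
def gam (x : Fin m → ℝ) : ℝ := Real.exp (-(nrm x)^2/2)

lemma gam_nonneg (x : Fin m → ℝ) : 0 ≤ gam x := (Real.exp_pos _).le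

lemma gam_eq : (gam : (Fin m → ℝ) → ℝ) = fun x => Real.exp (-(∑ i, x i * x i)/2) := by
  ext x; rw [gam, nrm_sq, ip]

lemma integral_gam (hm : 2 ≤ m) : ∫ x : Fin m → ℝ, gam x = (2 * Real.pi)^((m:ℝ)/2) := by
  have h := GaussianFourier.integral_rexp_neg_mul_sq_norm (V := EuclideanSpace ℝ (Fin m))
    (b := 1/2) (by norm_num)
  rw [← (PiLp.volume_preserving_toLp (Fin m)).integral_comp
      (MeasurableEquiv.toLp 2 (Fin m → ℝ)).measurableEmbedding] at h
  rw [show (2 * Real.pi) = Real.pi / (1/2) by ring]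
  rw [finrank_euclideanSpace_fin] at h
  rw [← h]
  refine integral_congr_ae (ae_of_all _ fun x => ?_)
  simp only [gam, nrm_eq]; congr 1; ring

lemma exp_decay (N : ℕ) : ∃ C : ℝ, 0 ≤ C ∧ ∀ t : ℝ, 0 ≤ t → (1+t)^N * Real.exp (-t^2/2) ≤ C := by
  refine ⟨N.factorial * Real.exp (3/2), by positivity, fun t ht => ?_⟩
  have h1 := Real.pow_div_factorial_le_exp (1+t) (by linarith) N
  rw [div_le_iff₀ (by positivity)] at h1
  have h2 : Real.exp (-t^2/2) ≤ Real.exp (3/2) * Real.exp (-(1+t)) := by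
    rw [← Real.exp_add]; apply Real.exp_le_exp.mpr; nlinarith [sq_nonneg (t-1)]
  calc (1+t)^N * Real.exp (-t^2/2)
      ≤ (Real.exp (1+t) * N.factorial) * (Real.exp (3/2) * Real.exp (-(1+t))) := by gcongr
    _ = N.factorial * Real.exp (3/2) * (Real.exp (1+t) * Real.exp (-(1+t))) := by ring
    _ = _ := by rw [← Real.exp_add]; simp

lemma integrable_gam_smul {V : Type*} [NormedAddCommGroup V] [NormedSpace ℝ V]
    {g : (Fin m → ℝ) → V} (hg : Continuous g) (d : ℕ) (K : ℝ)
    (hK : ∀ x, ‖g x‖ ≤ K * (1 + ‖x‖)^d) : Integrable (fun x => gam x • g x) := by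
  obtain ⟨C, hC0, hC⟩ := exp_decay (d + (m+1))
  have hK0 : 0 ≤ K := by simpa using (norm_nonneg _).trans (hK 0)
  have hi : Integrable (fun x : Fin m → ℝ => (1 + ‖x‖) ^ (-((m:ℝ)+1))) := by
    apply integrable_one_add_norm; simp
  refine (hi.const_mul (K * C)).mono' ?_ ?_
  · apply Continuous.aestronglyMeasurable
    rw [gam_eq]; fun_prop
  · refine ae_of_all _ fun x => ?_
    rw [norm_smul, Real.norm_of_nonneg (gam_nonneg x)]
    have hx : 0 < 1 + ‖x‖ := by positivity
    have h1 : gam x ≤ Real.exp (-‖x‖^2/2) := by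
      apply Real.exp_le_exp.mpr
      have := norm_le_nrm x
      have h0 := norm_nonneg x
      have : ‖x‖^2 ≤ nrm x ^2 := by gcongr
      linarith
    have h2 := hC ‖x‖ (norm_nonneg x)
    have h3 : (1 + ‖x‖) ^ (-((m:ℝ)+1)) = ((1 + ‖x‖)^(m+1))⁻¹ := by
      rw [Real.rpow_neg hx.le]; norm_cast
    rw [h3]
    calc gam x * ‖g x‖ ≤ Real.exp (-‖x‖^2/2) * (K * (1 + ‖x‖)^d) := by
          gcongr; exact hK x
      _ = K * ((1+‖x‖)^(d+(m+1)) * Real.exp (-‖x‖^2/2)) * ((1 + ‖x‖)^(m+1))⁻¹ := by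
          rw [pow_add]; field_simp
      _ ≤ _ := by gcongr

lemma integral_radial (hm : 2 ≤ m) (d : ℕ) :
    ∫ r in Set.Ioi (0:ℝ), r^(m-1) * (Real.exp (-r^2/2) * r^d)
      = 2^(((m:ℝ)+d)/2 - 1) * Real.Gamma (((m:ℝ)+d)/2) := by
  have h := integral_rpow_mul_exp_neg_mul_rpow (p := 2) (q := ((m:ℝ)+d-1)) (b := 1/2)
    (by norm_num) (by have : (2:ℝ) ≤ m := by exact_mod_cast hm
                      have : (0:ℝ) ≤ d := by positivity
                      linarith) (by norm_num)
  have e : ∫ r in Set.Ioi (0:ℝ), r^(m-1) * (Real.exp (-r^2/2) * r^d)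
     = ∫ x in Set.Ioi (0:ℝ), x ^ ((m:ℝ)+d-1) * Real.exp (-(1/2) * x ^ (2:ℝ)) := by
    refine setIntegral_congr_fun measurableSet_Ioi fun r hr => ?_
    have hr' : (0:ℝ) < r := hr
    have h1 : r ^ ((m:ℝ)+d-1) = r^(m-1) * r^d := by
      rw [← pow_add, ← Real.rpow_natCast]; congr 1
      push_cast [Nat.cast_sub (by omega : 1 ≤ m)]; ring
    have h2 : r ^ (2:ℝ) = r^2 := by exact_mod_cast Real.rpow_natCast r 2
    beta_reduce
    rw [h1, h2, show -r^2/2 = -(1/2) * r^2 by ring]; ring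
  rw [e, h]
  rw [show (m:ℝ) + d - 1 + 1 = m + d by ring, Real.rpow_sub (by norm_num), Real.rpow_one,
    one_div, Real.inv_rpow (by norm_num), ← Real.rpow_neg (by norm_num), neg_div, neg_neg]
  ring

open scoped ContDiff

/-- smooth homogeneous functions -/
structure Hom {V : Type*} [NormedAddCommGroup V] [NormedSpace ℝ V] (d : ℕ)
    (g : (Fin m → ℝ) → V) : Prop where
  sm : ContDiff ℝ ∞ g
  hom : ∀ (c : ℝ) x, g (c • x) = c^d • g x

section FH
variable {V : Type*} [NormedAddCommGroup V] [NormedSpace ℝ V] 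

/-- directional derivative -/
def dd (v : Fin m → ℝ) (g : (Fin m → ℝ) → V) : (Fin m → ℝ) → V := fun x => fderiv ℝ g x v

lemma Hom.const {g : (Fin m → ℝ) → V} (h : Hom 0 g) (x : Fin m → ℝ) : g x = g 0 := by
  have := h.hom 0 x
  simpa using this.symm

lemma Hom.diff {d : ℕ} {g : (Fin m → ℝ) → V} (h : Hom d g) : Differentiable ℝ g :=
  h.sm.differentiable (by simp)

lemma Hom.smdd {d : ℕ} {g : (Fin m → ℝ) → V} (h : Hom d g) (v : Fin m → ℝ) :
    ContDiff ℝ ∞ (dd v g) :=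
  (h.sm.fderiv_right (m := ∞) (by simp)).clm_apply contDiff_const

lemma Hom.dd {d : ℕ} {g : (Fin m → ℝ) → V} (h : Hom d g) (v : Fin m → ℝ) :
    Hom (d-1) (dd v g) := by
  refine ⟨h.smdd v, fun c x => ?_⟩
  rcases Nat.eq_zero_or_pos d with rfl | hd
  · have : g = fun _ => g 0 := funext h.const
    have h2 : CliffordFourier.dd v g = fun _ => 0 := by
      funext y; rw [CliffordFourier.dd, this]; simp
    simp [h2]
  have key : ∀ c ∈ ({0}ᶜ : Set ℝ), CliffordFourier.dd v g (c • x)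
      = c^(d-1) • CliffordFourier.dd v g x := by
    intro c hc
    have hc : c ≠ 0 := hc
    have e1 : fderiv ℝ (fun x => g (c • x)) x = c^d • fderiv ℝ g x := by
      rw [funext (h.hom c)]
      exact fderiv_fun_const_smul (h.diff x) _
    have e2 : fderiv ℝ (fun x => g (c • x)) x = c • fderiv ℝ g (c • x) := by
      have := (h.diff (c • x)).hasFDerivAt.comp x
        ((hasFDerivAt_id x).const_smul c)
      have := this.fderiv
      rw [show (fun x => g (c • x)) = g ∘ fun x => c • id x from rfl]
      erw [this]
      ext; simp
    have e3 := congrArg (fun T => T v) (e2.symm.trans e1)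
    simp only [ContinuousLinearMap.smul_apply] at e3
    obtain ⟨k, rfl⟩ : ∃ k, d = k+1 := ⟨d-1, by omega⟩
    rw [pow_succ', mul_smul] at e3
    exact smul_right_injective V hc e3
  have := Continuous.ext_on (dense_compl_singleton (0:ℝ)) ?_ ?_ key
  · exact congrFun this c
  · exact (h.smdd v).continuous.comp (by fun_prop)
  · fun_prop

lemma dd_sum {g : (Fin m → ℝ) → V} (x v : Fin m → ℝ) :
    dd v g x = ∑ i, v i • dd (Pi.single i 1) g x := by
  unfold dd
  conv_lhs => rw [show v = ∑ i, v i • (Pi.single i 1 : Fin m → ℝ) by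
    ext j; simp [Finset.sum_apply, Pi.single_apply]]
  rw [map_sum]; simp

lemma Hom.euler {d : ℕ} {g : (Fin m → ℝ) → V} (h : Hom d g) (x : Fin m → ℝ) :
    CliffordFourier.dd x g x = (d:ℝ) • g x := by
  have h1 : HasDerivAt (fun c : ℝ => c • x) x 1 := by
    simpa using (hasDerivAt_id (1:ℝ)).smul_const x
  have h2 : HasDerivAt (fun c : ℝ => g (c • x)) (fderiv ℝ g x x) 1 := by
    have := (h.diff ((1:ℝ) • x)).hasFDerivAt.comp_hasDerivAt (1:ℝ) h1
    simpa [Function.comp_def] using this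
  have h3 : HasDerivAt (fun c : ℝ => g (c • x)) ((d:ℝ) • g x) 1 := by
    have := (hasDerivAt_pow d (1:ℝ)).smul_const (g x)
    simp only [funext fun c => h.hom c x]
    simpa using this
  exact h2.unique h3

lemma Hom.bound {d : ℕ} {g : (Fin m → ℝ) → V} (h : Hom d g) :
    ∃ K : ℝ, ∀ x, ‖g x‖ ≤ K * (1+‖x‖)^d := by
  obtain ⟨K, hK⟩ := (isCompact_closedBall (0 : Fin m → ℝ) 1).exists_bound_of_continuousOn
    h.sm.continuous.continuousOn
  refine ⟨K, fun x => ?_⟩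
  have hp : 0 < 1 + ‖x‖ := by positivity
  have h1 : x = (1+‖x‖) • ((1+‖x‖)⁻¹ • x) := by rw [smul_smul, mul_inv_cancel₀ hp.ne', one_smul]
  have h2 := hK ((1+‖x‖)⁻¹ • x) (by
    rw [mem_closedBall_zero_iff, norm_smul, norm_inv, Real.norm_of_nonneg hp.le, inv_mul_le_iff₀ hp]
    linarith)
  conv_lhs => rw [h1, h.hom, norm_smul, Real.norm_of_nonneg (by positivity)]
  rw [mul_comm]
  gcongr

lemma Hom.integrable {d : ℕ} {g : (Fin m → ℝ) → V} (h : Hom d g) :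
    Integrable (fun x => gam x • g x) := by
  obtain ⟨K, hK⟩ := h.bound
  exact integrable_gam_smul h.sm.continuous d K hK

/-- inner product as CLM -/
def ipL (v : Fin m → ℝ) : (Fin m → ℝ) →L[ℝ] ℝ :=
  LinearMap.toContinuousLinearMap
    { toFun := fun x => ip x v
      map_add' := fun x y => by simp [ip, add_mul, Finset.sum_add_distrib]
      map_smul' := fun c x => by simp [ip_smul_left] }

@[simp] lemma ipL_ap (v x : Fin m → ℝ) : ipL v x = ip x v := rfl

lemma contDiff_ip (v : Fin m → ℝ) : ContDiff ℝ ∞ (fun x : Fin m → ℝ => ip x v) :=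
  (ipL v).contDiff

lemma Hom.ip_smul {d : ℕ} {g : (Fin m → ℝ) → V} (h : Hom d g) (v : Fin m → ℝ) :
    Hom (d+1) (fun x => ip x v • g x) := by
  refine ⟨(contDiff_ip v).smul h.sm, fun c x => ?_⟩
  simp only [h.hom, ip_smul_left, smul_smul]
  congr 1; ring

lemma Hom.ip_pow_smul {d : ℕ} {g : (Fin m → ℝ) → V} (h : Hom d g) (v : Fin m → ℝ) (n : ℕ) :
    Hom (d+n) (fun x => (ip x v)^n • g x) := by
  refine ⟨((contDiff_ip v).pow n).smul h.sm, fun c x => ?_⟩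
  simp only [h.hom, ip_smul_left, smul_smul]
  congr 1; ring

lemma hasFDerivAt_gam (x : Fin m → ℝ) : HasFDerivAt gam (-(gam x) • ipL x) x := by
  have h1 : ∀ i : Fin m, HasFDerivAt (fun x : Fin m → ℝ => x i * x i)
      ((2 * x i) • (ContinuousLinearMap.proj i : (Fin m → ℝ) →L[ℝ] ℝ)) x := by
    intro i
    have h := (ContinuousLinearMap.proj (R := ℝ) (φ := fun _ : Fin m => ℝ) i).hasFDerivAt (x := x)
    refine (h.mul h).congr_fderiv ?_
    ext v; simp; ring
  have h2 := (HasFDerivAt.fun_sum (u := Finset.univ) fun i _ => h1 i)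
  have h3 := (h2.const_mul (-1/2)).exp
  have e : (gam : (Fin m → ℝ) → ℝ) = fun x => Real.exp (-1/2 * ∑ i, x i * x i) := by
    rw [gam_eq]; funext y; congr 1; ring
  have e' := congrFun e x
  rw [e'] 
  rw [e]
  refine h3.congr_fderiv ?_
  ext v
  simp only [ip, Finset.mul_sum, ContinuousLinearMap.smul_apply, ipL_ap, smul_eq_mul, sum_apply,
    ContinuousLinearMap.proj_apply]
  refine Finset.sum_congr rfl fun i _ => ?_
  ring

lemma ibp {d : ℕ} {g : (Fin m → ℝ) → V} (h : Hom d g) (v : Fin m → ℝ) :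
    ∫ x, gam x • (ip x v • g x) = ∫ x, gam x • dd v g x := by
  have hd : ∀ x, fderiv ℝ gam x v • g x = -(gam x • (ip x v • g x)) := by
    intro x
    rw [(hasFDerivAt_gam x).fderiv]
    simp [smul_smul, ip_comm v x]
  have := integral_smul_fderiv_eq_neg_fderiv_smul_of_integrable (μ := volume)
    (f := (gam : (Fin m → ℝ) → ℝ)) (g := g) (v := v) ?_ (h.dd v).integrable h.integrable
    (fun x _ => (hasFDerivAt_gam x).differentiableAt) (fun x _ => h.diff x)
  · rw [show (fun x => gam x • dd v g x) = fun x => gam x • fderiv ℝ g x v from rfl, this]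
    simp_rw [hd]
    rw [integral_neg, neg_neg]
  · simp_rw [hd]
    exact (h.ip_smul v).integrable.neg

/-- harmonic -/
def Harm (g : (Fin m → ℝ) → V) : Prop :=
  ∀ x, ∑ i : Fin m, dd (Pi.single i 1) (dd (Pi.single i 1) g) x = 0

lemma dd_comm {g : (Fin m → ℝ) → V} (h : ContDiff ℝ ∞ g) (v w : Fin m → ℝ) :
    dd v (dd w g) = dd w (dd v g) := by
  have key : ∀ v w x, dd v (dd w g) x = fderiv ℝ (fderiv ℝ g) x v w := by
    intro v w x
    have hd : DifferentiableAt ℝ (fderiv ℝ g) x :=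
      (h.fderiv_right (m := ∞) (by simp)).differentiable (by simp) x
    have := (hd.hasFDerivAt.clm_apply (hasFDerivAt_const w x)).fderiv
    unfold dd
    rw [this]; simp
  funext x
  rw [key, key]
  have : ContDiffAt ℝ 2 g x := (h.of_le (by norm_cast)).contDiffAt
  exact (this.isSymmSndFDerivAt (by simp)) v w

lemma dd_finsum {ι : Type*} (s : Finset ι) (G : ι → (Fin m → ℝ) → V)
    (h : ∀ i ∈ s, Differentiable ℝ (G i)) (v x : Fin m → ℝ) :
    dd v (fun x => ∑ i ∈ s, G i x) x = ∑ i ∈ s, dd v (G i) x := by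
  unfold dd
  rw [fderiv_fun_sum fun i hi => h i hi x]
  simp

lemma Harm.dd {d : ℕ} {g : (Fin m → ℝ) → V} (hg : Hom d g) (h : Harm g) (v : Fin m → ℝ) :
    Harm (dd v g) := by
  intro x
  have e1 : ∀ i : Fin m, CliffordFourier.dd (Pi.single i 1) (CliffordFourier.dd (Pi.single i 1)
      (CliffordFourier.dd v g)) = CliffordFourier.dd v (CliffordFourier.dd (Pi.single i 1)
      (CliffordFourier.dd (Pi.single i 1) g)) := by
    intro i
    rw [dd_comm hg.sm _ v, dd_comm (hg.dd _).sm _ v]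
  simp_rw [e1]
  rw [← dd_finsum _ _ fun i _ => ((hg.dd _).dd _).diff, funext h]
  simp [CliffordFourier.dd]

/-- Gaussian Funk–Hecke coefficients -/
def cc (n l : ℕ) : ℝ :=
  if l ≤ n ∧ Even (n - l) then (n.factorial : ℝ) / (2^((n-l)/2) * ((n-l)/2).factorial) else 0

lemma cc_eq (l j : ℕ) : cc (l+2*j) l = ((l+2*j).factorial : ℝ) / (2^j * j.factorial) := by
  rw [cc, if_pos ⟨by omega, by simp⟩]
  simp

lemma cc_zero (n l : ℕ) (h : ∀ j, n ≠ l + 2*j) : cc n l = 0 := by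
  rw [cc, if_neg]
  rintro ⟨h1, j, hj⟩
  exact h j (by omega)

lemma cc_succ (n l : ℕ) : cc (n+1) l = n * cc (n-1) l + l * cc n (l-1) := by
  by_cases h : ∃ j, n + 1 = l + 2*j
  · obtain ⟨j, hj⟩ := h
    rw [hj, cc_eq]
    have e2 : (l:ℝ) * cc n (l-1) = l * (n.factorial : ℝ) / (2^j * j.factorial) := by
      rcases l with _ | l
      · simp
      · obtain rfl : n = l + 2*j := by omega
        simp only [Nat.add_sub_cancel]
        rw [cc_eq]; ring
    rw [e2, ← hj]
    have hfac : ((n+1).factorial : ℝ) = (l + 2*j) * n.factorial := by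
      rw [Nat.factorial_succ]; push_cast
      have : (n:ℝ) + 1 = l + 2*j := by exact_mod_cast hj
      rw [this]
    rw [hfac]
    rcases j with _ | j
    · rcases n with _ | n
      · simp
      · rw [cc_zero _ _ (by intro j; omega)]
        simp
    · rcases n with _ | n
      · omega
      · obtain rfl : n = l + 2*j := by omega
        simp only [Nat.add_sub_cancel]
        rw [cc_eq, Nat.factorial_succ, Nat.factorial_succ]
        push_cast
        field_simp
        ring
  · push Not at h
    have e1 : (l:ℝ) * cc n (l-1) = 0 := by
      rcases l with _ | l
      · simp
      · rw [cc_zero _ _ (fun j hj => h j (by omega)), mul_zero]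
    rw [cc_zero _ _ h, e1, add_zero]
    rcases n with _ | n
    · simp
    · rw [cc_zero (n+1-1) l, mul_zero]
      intro j hj
      exact h (j+1) (by omega)

lemma gauss_funk [CompleteSpace V] (hm : 2 ≤ m) (η : Fin m → ℝ) (hη : ip η η = 1) (n : ℕ) :
    ∀ (l : ℕ) (H : (Fin m → ℝ) → V), Hom l H → Harm H →
    ∫ x, gam x • ((ip x η)^n • H x) = ((2*Real.pi)^((m:ℝ)/2) * cc n l) • H η := by
  induction n using Nat.strong_induction_on with
  | _ n ih =>
  intro l H hH hHarm
  rcases n with _ | n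
  · rcases Nat.eq_zero_or_pos l with rfl | hl
    · have := cc_eq 0 0
      simp only [mul_zero, add_zero] at this
      rw [this]
      simp only [pow_zero, one_smul, hH.const]
      rw [integral_smul_const, integral_gam hm]
      simp
    · rw [cc_zero _ _ (by omega), mul_zero, zero_smul]
      simp only [pow_zero, one_smul]
      have h1 : (l:ℝ) • ∫ x, gam x • H x = 0 := by
        rw [← integral_smul]
        have : ∀ x, (l:ℝ) • gam x • H x = ∑ i, gam x • (ip x (Pi.single i 1) •
            CliffordFourier.dd (Pi.single i 1) H x) := by
          intro x
          rw [smul_comm, ← hH.euler, dd_sum, Finset.smul_sum]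
          simp [ip, Pi.single_apply]
        simp_rw [this]
        rw [integral_finsetSum _ fun i _ => ((hH.dd _).ip_smul _).integrable]
        simp_rw [ibp (hH.dd _)]
        rw [← integral_finsetSum _ fun i _ => ((hH.dd _).dd _).integrable]
        simp_rw [← Finset.smul_sum]
        simp [hHarm _]
      have hl' : (l:ℝ) ≠ 0 := by positivity
      exact (smul_eq_zero.mp h1).resolve_left hl'
  · have e0 : ∀ x, gam x • ((ip x η)^(n+1) • H x) = gam x • (ip x η • ((ip x η)^n • H x)) := by
      intro x; rw [pow_succ', mul_smul]
    simp_rw [e0]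
    rw [ibp (hH.ip_pow_smul η n)]
    have e1 : ∀ x, dd η (fun x => (ip x η)^n • H x) x
        = (n:ℝ) • ((ip x η)^(n-1) • H x) + (ip x η)^n • dd η H x := by
      intro x
      have h1 := (((ipL η).hasFDerivAt (x := x)).pow n).smul (hH.diff x).hasFDerivAt
      unfold dd
      erw [h1.fderiv]
      simp [hη, smul_smul, add_comm]
    simp_rw [e1, smul_add]
    have e2 : ∀ x, gam x • ((n:ℝ) • ((ip x η)^(n-1) • H x))
      = (n:ℝ) • (gam x • ((ip x η)^(n-1) • H x)) := fun x => smul_comm _ _ _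
    simp_rw [e2]
    rw [integral_add ((hH.ip_pow_smul η (n-1)).integrable.fun_smul _)
      ((hH.dd η).ip_pow_smul η n).integrable, integral_smul,
      ih n (by omega) _ _ (hH.dd η) (hHarm.dd hH η), ih (n-1) (by omega) _ _ hH hHarm,
      hH.euler, smul_smul, smul_smul, ← add_smul, cc_succ]
    congr 1; ring

end FH

section FS
variable {V : Type*} [NormedAddCommGroup V] [NormedSpace ℝ V]

/-- Funk–Hecke coefficients on the sphere -/
def cs (lam : ℝ) (n l : ℕ) : ℝ :=
  2 * Real.pi^(lam+1) * cc n l / (2^((n+l)/2) * Real.Gamma ((((n+l)/2 : ℕ) : ℝ) + lam + 1))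

lemma cs_eq (lam : ℝ) (l j : ℕ) : cs lam (l+2*j) l =
    2 * Real.pi^(lam+1) * ((l+2*j).factorial : ℝ) /
      (2^(l+2*j) * j.factorial * Real.Gamma ((l:ℝ) + j + lam + 1)) := by
  rw [cs, cc_eq, show (l+2*j+l)/2 = l + j by omega]
  push_cast
  rw [show l + 2*j = (l+j)+j by ring, pow_add 2 (l+j) j]
  field_simp

lemma cs_zero (lam : ℝ) (n l : ℕ) (h : ∀ j, n ≠ l + 2*j) : cs lam n l = 0 := by
  rw [cs, cc_zero _ _ h]; simp

lemma sphere_funk [CompleteSpace V] (hm : 2 ≤ m) (η : Fin m → ℝ) (hη : ip η η = 1) (n : ℕ)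
    (l : ℕ) (H : (Fin m → ℝ) → V) (hH : Hom l H) (hh : Harm H) :
    sint (fun x => (ip x η)^n • H x) = cs (((m:ℝ)-2)/2) n l • H η := by
  have h1 := gauss_funk hm η hη n l H hH hh
  have h2 := polar_hom hm (fun r => Real.exp (-r^2/2)) (fun x => (ip x η)^n • H x) (l+n) (hH.ip_pow_smul η n).hom
  rw [integral_radial hm] at h2
  have h3 := h2.symm.trans h1
  have hpos : 0 < (2:ℝ)^(((m:ℝ)+((l+n:ℕ):ℝ))/2 - 1) * Real.Gamma (((m:ℝ)+((l+n:ℕ):ℝ))/2) := by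
    have : (2:ℝ) ≤ m := by exact_mod_cast hm
    have : 0 < Real.Gamma (((m:ℝ)+((l+n:ℕ):ℝ))/2) := Real.Gamma_pos_of_pos (by positivity)
    positivity
  have h4 : sint (fun x => (ip x η)^n • H x) = ((2 * Real.pi)^((m:ℝ)/2) * cc n l /
      ((2:ℝ)^(((m:ℝ)+((l+n:ℕ):ℝ))/2 - 1) * Real.Gamma (((m:ℝ)+((l+n:ℕ):ℝ))/2))) • H η := by
    rw [div_eq_inv_mul, mul_smul, ← h3, smul_smul, inv_mul_cancel₀ hpos.ne', one_smul]
  rw [h4]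
  congr 1
  by_cases h : ∃ j, n = l + 2*j
  · obtain ⟨j, rfl⟩ := h
    rw [cs_eq, cc_eq]
    have e1 : ((m:ℝ)+((l+(l+2*j):ℕ):ℝ))/2 = (l:ℝ) + j + ((m:ℝ)-2)/2 + 1 := by push_cast; ring
    rw [e1]
    have e2 : (2:ℝ)^((l:ℝ) + j + ((m:ℝ)-2)/2 + 1 - 1) = 2^(l+j) * (2:ℝ)^((m:ℝ)/2) / 2 := by
      rw [show (l:ℝ) + j + ((m:ℝ)-2)/2 + 1 - 1 = ((l+j:ℕ):ℝ) + (m:ℝ)/2 - 1 by push_cast; ring,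
        Real.rpow_sub (by norm_num), Real.rpow_add (by norm_num), Real.rpow_natCast, Real.rpow_one]
    rw [e2, Real.mul_rpow (by norm_num) Real.pi_pos.le,
      show ((m:ℝ)-2)/2 + 1 = (m:ℝ)/2 by ring, show l + 2*j = (l+j)+j by ring, pow_add 2 (l+j) j]
    rw [e1] at hpos
    have hG : Real.Gamma ((l:ℝ) + j + ((m:ℝ)-2)/2 + 1) ≠ 0 := (pos_of_mul_pos_right hpos (by positivity)).ne'
    have h2 : (2:ℝ)^((m:ℝ)/2) ≠ 0 := by positivity
    field_simp
  · push Not at h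
    rw [cs_zero _ _ _ h, cc_zero _ _ h]; simp

lemma gamma_step (lam : ℝ) (h : 0 ≤ lam) (k : ℕ) (hk : 0 < k) :
    Real.Gamma ((k:ℝ) + lam + 1) = ((k:ℝ)+lam) * Real.Gamma ((k:ℝ) + lam) := by
  apply Real.Gamma_add_one
  positivity

lemma cs_rel0 (lam : ℝ) (n : ℕ) : cs lam (n+1) 0 = cs lam n 1 := by
  by_cases h : ∃ j, n + 1 = 0 + 2*j
  · obtain ⟨j, hj⟩ := h
    obtain ⟨i, rfl⟩ : ∃ i, j = i+1 := ⟨j-1, by omega⟩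
    obtain rfl : n = 1 + 2*i := by omega
    rw [hj, cs_eq, cs_eq, show 0 + 2*(i+1) = (1+2*i)+1 by ring, Nat.factorial_succ (1+2*i),
      Nat.factorial_succ i, pow_succ]
    push_cast
    rw [show (0:ℝ) + (i+1) + lam + 1 = 1 + i + lam + 1 by ring]
    rcases eq_or_ne (Real.Gamma (1 + (i:ℝ) + lam + 1)) 0 with h0 | h0
    · simp [h0]
    have : (i:ℝ) + 1 ≠ 0 := by positivity
    field_simp
    ring
  · push Not at h
    rw [cs_zero _ _ _ h, cs_zero]
    intro j hj
    exact h (j+1) (by omega)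

lemma cs_rel (lam : ℝ) (hl : 0 ≤ lam) (n l : ℕ) :
    2 * ((l:ℝ)+1+lam) * cs lam (n+1) (l+1)
      = ((l:ℝ)+1+2*lam) * cs lam n (l+2) + ((l:ℝ)+1) * cs lam n l := by
  by_cases h : ∃ j, n + 1 = (l+1) + 2*j
  · obtain ⟨j, hj⟩ := h
    obtain rfl : n = l + 2*j := by omega
    rw [hj, cs_eq, cs_eq]
    have hp : 0 < (l:ℝ) + j + lam + 1 := by positivity
    have hG := Real.Gamma_pos_of_pos hp
    rw [show l + 1 + 2*j = (l + 2*j)+1 by ring, Nat.factorial_succ (l+2*j), pow_succ]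
    push_cast
    rw [show (l:ℝ)+1+j+lam+1 = ((l:ℝ) + j + lam + 1)+1 by ring, Real.Gamma_add_one hp.ne']
    rcases j with _ | i
    · rw [cs_zero _ _ _ (by intro j; omega)]
      simp at *
      field_simp
      ring
    · rw [show l + 2*(i+1) = (l+2)+2*i by ring, cs_eq, Nat.factorial_succ i]
      push_cast at *
      rw [show (l:ℝ)+2+i+lam+1 = ((l:ℝ) + (i+1) + lam + 1)+1 by ring, Real.Gamma_add_one hp.ne']
      have : (i:ℝ) + 1 ≠ 0 := by positivity
      field_simp
      ring
  · push Not at h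
    rw [cs_zero _ _ _ h, cs_zero _ _ _ (fun j hj => h (j+1) (by omega)),
      cs_zero _ _ _ (fun j hj => h (j) (by omega))]
    simp

open Polynomial in
/-- the functional -/
def Lf (lam : ℝ) (l : ℕ) : ℝ[X] →ₗ[ℝ] ℝ :=
  Polynomial.lsum fun n => (cs lam n l) • (LinearMap.id : ℝ →ₗ[ℝ] ℝ)

open Polynomial in
lemma Lf_mon (lam : ℝ) (l n : ℕ) (a : ℝ) : Lf lam l (monomial n a) = cs lam n l * a := by
  simp [Lf, Polynomial.lsum_apply]

open Polynomial in
lemma Lf_X0 (lam : ℝ) (p : ℝ[X]) : Lf lam 0 (X * p) = Lf lam 1 p := by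
  induction p using Polynomial.induction_on' with
  | add p q hp hq => rw [mul_add, map_add, map_add, hp, hq]
  | monomial n a => rw [X_mul_monomial, Lf_mon, Lf_mon, cs_rel0]

open Polynomial in
lemma Lf_X (lam : ℝ) (hl : 0 ≤ lam) (l : ℕ) (p : ℝ[X]) :
    2 * ((l:ℝ)+1+lam) * Lf lam (l+1) (X * p)
      = ((l:ℝ)+1+2*lam) * Lf lam (l+2) p + ((l:ℝ)+1) * Lf lam l p := by
  induction p using Polynomial.induction_on' with
  | add p q hp hq => rw [mul_add X, map_add, map_add, map_add]; linear_combination hp + hq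
  | monomial n a =>
    rw [X_mul_monomial, Lf_mon, Lf_mon, Lf_mon]
    linear_combination a * cs_rel lam hl n l

open Polynomial in
/-- Gegenbauer as polynomials -/
def gegP (mu : ℝ) : ℕ → ℝ[X]
  | 0 => 1
  | 1 => C (2*mu) * X
  | (k+2) => C (2 * ((k : ℝ) + 1 + mu) / ((k:ℝ)+2)) * (X * gegP mu (k+1))
      - C (((k : ℝ) + 2 * mu)/((k:ℝ)+2)) * gegP mu k

lemma gegP_eval (mu w : ℝ) (k : ℕ) : (gegP mu k).eval w = geg mu k w := by
  induction k using Nat.strong_induction_on with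
  | _ k ih =>
    rcases k with _ | _ | k
    · simp [gegP, geg]
    · simp [gegP, geg]
    · simp [gegP, geg, ih k (by omega), ih (k+1) (by omega)]
      have : (k:ℝ) + 2 ≠ 0 := by positivity
      field_simp

/-- truth value -/
def TT (k l : ℕ) : ℝ := if l ≤ k ∧ Even (k-l) then 1 else 0

lemma TT_one (k l : ℕ) (h : ∃ j, k = l + 2*j) : TT k l = 1 := by
  obtain ⟨j, rfl⟩ := h
  rw [TT, if_pos ⟨by omega, by simp⟩]

lemma TT_zero (k l : ℕ) (h : ¬ ∃ j, k = l + 2*j) : TT k l = 0 := by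
  rw [TT, if_neg]
  rintro ⟨h1, j, hj⟩
  exact h ⟨j, by omega⟩

lemma TT_ss (k l : ℕ) : TT (k+1) (l+1) = TT k l := by
  simp [TT]

lemma TT_s2 (k l : ℕ) : TT (k+2) l = TT k l + if l = k+2 then 1 else 0 := by
  by_cases h : ∃ j, k = l + 2*j
  · obtain ⟨j, rfl⟩ := h
    rw [TT_one _ _ ⟨j+1, by ring⟩, TT_one _ _ ⟨j, rfl⟩, if_neg (by omega), add_zero]
  · rw [TT_zero k l h, zero_add]
    split_ifs with h2
    · exact TT_one _ _ ⟨0, by omega⟩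
    · refine TT_zero _ _ ?_
      rintro ⟨j, hj⟩
      exact h ⟨j-1, by omega⟩

/-- the sphere area -/
def sg0 (lam : ℝ) : ℝ := 2 * Real.pi^(lam+1) / Real.Gamma (lam+1)

lemma Lf_geg (lam : ℝ) (hl : 0 ≤ lam) (k : ℕ) : ∀ l,
    Lf lam l (gegP (lam+1) k) = sg0 lam * TT k l := by
  induction k using Nat.strong_induction_on with
  | _ k ih =>
  intro l
  have hG : 0 < Real.Gamma (lam+1) := Real.Gamma_pos_of_pos (by positivity)
  rcases k with _ | _ | k
  · rw [gegP, ← Polynomial.monomial_zero_one, Lf_mon]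
    by_cases h : l = 0
    · subst h
      rw [TT_one _ _ ⟨0, rfl⟩]
      have := cs_eq lam 0 0
      simp only [mul_zero, add_zero] at this
      rw [this, sg0]; simp
    · rw [TT_zero, cs_zero]
      · simp
      · omega
      · omega
  · rw [gegP, ← Polynomial.monomial_one_one_eq_X, Polynomial.C_mul_monomial, Lf_mon]
    by_cases h : l = 1
    · subst h
      rw [TT_one _ _ ⟨0, rfl⟩]
      have := cs_eq lam 1 0
      simp only [mul_zero, add_zero] at this
      rw [this, sg0]
      have : Real.Gamma (1 + lam + 1) = (lam+1)*Real.Gamma (lam+1) := by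
        rw [← Real.Gamma_add_one (by positivity)]; congr 1; ring
      simp [this]
      field_simp
    · rw [TT_zero, cs_zero]
      · simp
      · omega
      · omega
  · rw [gegP, map_sub, Polynomial.C_mul', Polynomial.C_mul', map_smul, map_smul, ih k (by omega)]
    have hk2 : (k:ℝ) + 2 ≠ 0 := by positivity
    simp only [smul_eq_mul]
    rcases l with _ | l
    · rw [Lf_X0, ih (k+1) (by omega), TT_s2, if_neg (by omega), TT_ss]
      field_simp
      ring
    · have h := Lf_X lam hl l (gegP (lam+1) (k+1))
      rw [ih (k+1) (by omega), ih (k+1) (by omega), TT_ss, ← TT_ss (k+1) l, TT_s2] at h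
      rw [TT_s2]
      have hpos : (l:ℝ) + 1 + lam ≠ 0 := by positivity
      have h' : Lf lam (l+1) (Polynomial.X * gegP (lam+1) (k+1)) = 
        ((l + 1 + 2 * lam) * (sg0 lam * TT k (l + 1)) +
    (l + 1) * (sg0 lam * (TT k (l + 1) + if l + 1 = k + 2 then 1 else 0)))/(2 * (l + 1 + lam)) := by
        rw [← h]; field_simp
      rw [h']
      split_ifs with hh
      · have : (l:ℝ) + 1 = k + 2 := by exact_mod_cast hh
        have h0 : TT k (l+1) = 0 := TT_zero _ _ (by omega)
        rw [h0]
        have : (k:ℝ) + 1 + (lam+1) = l + 1 + lam := by linarith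
        rw [this]
        have h3 : (k:ℝ) + 2 = l + 1 := by linarith
        rw [h3] 
        have : (l:ℝ) + 1 ≠ 0 := by positivity
        field_simp
        ring
      · field_simp
        ring

lemma sint_integrable {h : (Fin m → ℝ) → V} (hh : Continuous h) :
    Integrable (fun ξ : Sph m => h (WithLp.ofLp ξ.1)) (sig m) := by
  have hc : Continuous (fun ξ : Sph m => h (WithLp.ofLp ξ.1)) := by fun_prop
  exact hc.integrable_of_hasCompactSupport (HasCompactSupport.of_compactSpace _)

open Polynomial in
lemma sint_poly [CompleteSpace V] (hm : 2 ≤ m) (η : Fin m → ℝ) (hη : ip η η = 1)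
    (l : ℕ) (H : (Fin m → ℝ) → V) (hH : Hom l H) (hh : Harm H) (p : ℝ[X]) :
    sint (fun x => p.eval (ip x η) • H x) = Lf (((m:ℝ)-2)/2) l p • H η := by
  induction p using Polynomial.induction_on' with
  | add p q hp hq =>
    rw [map_add, add_smul, ← hp, ← hq]
    unfold sint
    rw [← integral_add]
    · simp [add_smul]
    · exact sint_integrable (h := fun x => p.eval (ip x η) • H x)
        ((p.continuous.comp (continuous_ip_left η)).smul hH.sm.continuous)
    · exact sint_integrable (h := fun x => q.eval (ip x η) • H x)
        ((q.continuous.comp (continuous_ip_left η)).smul hH.sm.continuous)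
  | monomial n a =>
    rw [Lf_mon, mul_comm, mul_smul, ← sphere_funk hm η hη n l H hH hh]
    unfold sint
    rw [← integral_smul]
    simp [mul_smul]

lemma sint_geg [CompleteSpace V] (hm : 2 ≤ m) (η : Fin m → ℝ) (hη : ip η η = 1)
    (l : ℕ) (H : (Fin m → ℝ) → V) (hH : Hom l H) (hh : Harm H) (k : ℕ) :
    sint (fun x => geg (((m:ℝ)-2)/2+1) k (ip x η) • H x)
      = (sg0 (((m:ℝ)-2)/2) * TT k l) • H η := by
  have h2 : (2:ℝ) ≤ m := by exact_mod_cast hm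
  rw [← Lf_geg _ (by linarith), ← sint_poly hm η hη l H hH hh]
  simp_rw [gegP_eval]

end FS

section BS
open scoped ContDiff

/-- Bessel term -/
def btm (a t : ℝ) (j : ℕ) : ℝ :=
  ((-1 : ℝ)^j * (t/2) ^ (2*j)) / (j.factorial * Real.Gamma ((j : ℝ) + a + 1) * (2:ℝ)^a)

lemma besselJt_eq (a t : ℝ) : besselJt a t = ∑' j, btm a t j := rfl

lemma gamma_lower (a : ℝ) (ha : 0 ≤ a) (j : ℕ) : Real.Gamma (a+1) ≤ Real.Gamma ((j:ℝ) + a + 1) := by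
  induction j with
  | zero => simp
  | succ j ih =>
    push_cast
    rw [show (j:ℝ)+1+a+1 = (j + a + 1) + 1 by ring, Real.Gamma_add_one (s := (j:ℝ)+a+1) (by positivity)]
    have : 0 < Real.Gamma ((j:ℝ)+a+1) := Real.Gamma_pos_of_pos (by positivity)
    have : 0 ≤ (j:ℝ) + a := by positivity
    nlinarith

lemma summable_btm (a t : ℝ) (ha : 0 ≤ a) : Summable (btm a t) := by
  have hG : 0 < Real.Gamma (a+1) := Real.Gamma_pos_of_pos (by positivity)
  have h1 := (Real.summable_pow_div_factorial ((t/2)^2)).mul_left ((Real.Gamma (a+1) * 2^a)⁻¹)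
  refine Summable.of_norm_bounded h1 fun j => ?_
  have hj := gamma_lower a ha j
  have hG2 : 0 < Real.Gamma ((j:ℝ)+a+1) := hG.trans_le hj
  rw [btm, norm_div, norm_mul, norm_pow, norm_neg, norm_one, one_pow, one_mul,
    pow_mul, Real.norm_of_nonneg (by positivity : 0 ≤ ((t/2)^2)^j), Real.norm_of_nonneg (by positivity),
    ← div_eq_inv_mul, div_div]
  have : (j.factorial:ℝ) * Real.Gamma ((j:ℝ)+a+1) * 2^a = j.factorial * (Real.Gamma ((j:ℝ)+a+1) * 2^a) := by ring
  rw [this]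
  gcongr

lemma besselJt_rec (a t : ℝ) (ha : 0 ≤ a) :
    besselJt a t + t^2 * besselJt (a+2) t = 2*(a+1) * besselJt (a+1) t := by
  have s0 := summable_btm a t ha
  have s1 := (summable_btm (a+1) t (by positivity)).mul_left (2*(a+1))
  have s2 := (summable_btm (a+2) t (by positivity)).mul_left (t^2)
  have key : ∑' j, (2*(a+1) * btm (a+1) t j - btm a t j) = ∑' j, t^2 * btm (a+2) t j := by
    have hG : ∀ j : ℕ, Real.Gamma ((j:ℝ)+a+1) ≠ 0 := fun j =>
      (Real.Gamma_pos_of_pos (by positivity)).ne'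
    have h2a : (2:ℝ)^a ≠ 0 := by positivity
    have e1 : (2:ℝ)^(a+1) = 2^a*2 := by rw [Real.rpow_add (by norm_num), Real.rpow_one]
    have e2 : (2:ℝ)^(a+2) = 2^a*4 := by rw [Real.rpow_add (by norm_num)]; norm_num
    rw [(s1.sub s0).tsum_eq_zero_add]
    have z0 : 2*(a+1) * btm (a+1) t 0 - btm a t 0 = 0 := by
      have g1 : Real.Gamma (a+1+1) = (a+1)*Real.Gamma (a+1) := Real.Gamma_add_one (by positivity)
      have := hG 0
      simp [btm, e1, g1] at *
      field_simp
      ring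
    rw [z0, zero_add]
    refine tsum_congr fun j => ?_
    have g0 : Real.Gamma (((j+1:ℕ):ℝ) + a + 1) = (j+a+1) * Real.Gamma (j+a+1) := by
      rw [← Real.Gamma_add_one (by positivity)]; push_cast; congr 1; ring
    have g1 : Real.Gamma (((j+1:ℕ):ℝ) + (a+1) + 1) = (j+a+2) * ((j+a+1) * Real.Gamma (j+a+1)) := by
      rw [← Real.Gamma_add_one (by positivity), show (j:ℝ)+a+2 = j+a+1+1 by ring,
        ← Real.Gamma_add_one (by positivity)]; push_cast; congr 1; ring
    have g2 : Real.Gamma ((j:ℝ) + (a+2) + 1) = (j+a+2) * ((j+a+1) * Real.Gamma (j+a+1)) := by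
      rw [← Real.Gamma_add_one (by positivity), show (j:ℝ)+a+2 = j+a+1+1 by ring,
        ← Real.Gamma_add_one (by positivity)]; congr 1; ring
    have := hG j
    have p1 : (j:ℝ)+a+1 ≠ 0 := by positivity
    have p2 : (j:ℝ)+a+2 ≠ 0 := by positivity
    have p3 : (j:ℝ)+1 ≠ 0 := by positivity
    rw [btm, btm, btm, g0, g1, g2, e1, e2, Nat.factorial_succ, show 2*(j+1) = 2*j+2 by ring,
      pow_add (t/2), pow_succ (-1:ℝ)]
    push_cast
    field_simp
    ring
  rw [s1.tsum_sub s0, tsum_mul_left, tsum_mul_left, ← besselJt_eq, ← besselJt_eq, ← besselJt_eq] at key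
  linarith

/-- z^{-lam} J_{k+lam}(z) -/
def jk (lam : ℝ) (k : ℕ) (z : ℝ) : ℝ := z^k * besselJt ((k:ℝ)+lam) z

lemma jk_rec (lam : ℝ) (hl : 0 ≤ lam) (k : ℕ) (z : ℝ) :
    2*((k:ℝ)+1+lam) * jk lam (k+1) z = z * (jk lam k z + jk lam (k+2) z) := by
  have h := besselJt_rec ((k:ℝ)+lam) z (by positivity)
  unfold jk
  push_cast
  rw [show (k:ℝ)+1+lam = k+lam+1 by ring, show (k:ℝ)+2+lam = k+lam+2 by ring]
  linear_combination (-z^(k+1)) * h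

lemma jk_bessel (lam : ℝ) (k : ℕ) (z : ℝ) (hz : 0 < z) :
    z^(-lam) * besselJ ((k:ℝ)+lam) z = jk lam k z := by
  unfold jk besselJ besselJt
  rw [← tsum_mul_left, ← tsum_mul_left]
  refine tsum_congr fun j => ?_
  have e1 : (z/2)^(2*(j:ℝ) + ((k:ℝ)+lam)) = (z/2)^(2*j) * (z^k * z^lam / 2^((k:ℝ)+lam)) := by
    rw [Real.rpow_add (by positivity), Real.div_rpow hz.le (by norm_num) ((k:ℝ)+lam),
      Real.rpow_add hz, Real.rpow_natCast]
    congr 1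
    exact_mod_cast Real.rpow_natCast (z/2) (2*j)
  rw [e1, Real.rpow_neg hz.le]
  have : z^lam ≠ 0 := by positivity
  field_simp

lemma measurable_jk (lam : ℝ) (hl : 0 ≤ lam) (k : ℕ) : Measurable (jk lam k) := by
  unfold jk
  refine Measurable.mul (by fun_prop) ?_
  refine measurable_of_tendsto_metrizable (f := fun n z => ∑ j ∈ Finset.range n, btm ((k:ℝ)+lam) z j)
    (fun n => ?_) ?_
  · unfold btm; fun_prop
  · rw [tendsto_pi_nhds]
    intro z
    exact (summable_btm _ z (by positivity)).hasSum.tendsto_sum_nat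

/-- complex linear form -/
def zL (i0 i1 : Fin m) : (Fin m → ℝ) →L[ℝ] ℂ :=
  (ContinuousLinearMap.proj i0 : (Fin m → ℝ) →L[ℝ] ℝ).smulRight (1:ℂ)
  + (ContinuousLinearMap.proj i1 : (Fin m → ℝ) →L[ℝ] ℝ).smulRight (Complex.I)

lemma zL_ap (i0 i1 : Fin m) (x) : zL i0 i1 x = (x i0 : ℂ) + (x i1 : ℂ) * Complex.I := by
  simp [zL]

lemma zH_hom (i0 i1 : Fin m) (k : ℕ) : Hom k (fun x => (zL i0 i1 x)^k) := by
  refine ⟨(zL i0 i1).contDiff.pow k, fun c x => ?_⟩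
  rw [map_smul, smul_pow]

lemma zH_dd (i0 i1 : Fin m) (k : ℕ) (c : ℂ) (v : Fin m → ℝ) :
    dd v (fun x => c * (zL i0 i1 x)^k) = fun x => (c * k * zL i0 i1 v) * (zL i0 i1 x)^(k-1) := by
  funext x
  have h := (((zL i0 i1).hasFDerivAt (x := x)).pow k).const_mul c
  unfold dd
  erw [h.fderiv]
  simp
  ring

lemma zH_harm (i0 i1 : Fin m) (h01 : i0 ≠ i1) (k : ℕ) : Harm (fun x => (zL i0 i1 x)^k) := by
  intro x
  have e1 : (fun x => (zL i0 i1 x)^k) = fun x => (1:ℂ) * (zL i0 i1 x)^k := by simp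
  simp_rw [e1, zH_dd]
  have : ∀ i : Fin m, 1 * (k:ℂ) * zL i0 i1 (Pi.single i 1) * ((k-1 : ℕ):ℂ) * zL i0 i1 (Pi.single i 1)
      * (zL i0 i1 x)^(k-1-1) = ((k:ℂ) * ((k-1 : ℕ):ℂ) * (zL i0 i1 x)^(k-1-1)) *
       (zL i0 i1 (Pi.single i 1))^2 := by intro i; ring
  simp_rw [this]
  rw [← Finset.mul_sum]
  have h2 : ∀ i : Fin m, (zL i0 i1 (Pi.single i 1))^2 =
      (if i = i0 then (1:ℂ) else 0) + (if i = i1 then (-1:ℂ) else 0) := by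
    intro i
    rw [zL_ap]
    by_cases h : i = i0
    · subst h; simp [h01, Pi.single_apply, h01.symm]
    · by_cases h' : i = i1
      · subst h'; simp [h, Pi.single_apply, h01]
      · simp [h, h', Pi.single_apply, Ne.symm h, Ne.symm h', eq_comm]
  simp_rw [h2]
  rw [Finset.sum_add_distrib]
  simp

lemma zL_norm (i0 i1 : Fin m) (h01 : i0 ≠ i1) (x : Fin m → ℝ) : ‖zL i0 i1 x‖ ≤ nrm x := by
  rw [zL_ap, Complex.norm_add_mul_I, nrm]
  apply Real.sqrt_le_sqrt
  rw [ip, ← Finset.sum_pair (f := fun i => x i ^2) h01]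
  simp_rw [← sq]
  exact Finset.sum_le_univ_sum_of_nonneg fun i => sq_nonneg _

lemma exists_jk_bound (hm : 2 ≤ m) : ∃ C : ℝ, 0 ≤ C ∧ ∀ k z, |jk (((m:ℝ)-2)/2) k z| ≤ C := by
  set lam := ((m:ℝ)-2)/2 with hlam
  have hl : 0 ≤ lam := by have : (2:ℝ) ≤ m := by exact_mod_cast hm
                          rw [hlam]; linarith
  let i0 : Fin m := ⟨0, by omega⟩
  let i1 : Fin m := ⟨1, by omega⟩
  have h01 : i0 ≠ i1 := by simp [i0, i1]
  let η : Fin m → ℝ := Pi.single i0 1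
  have hη : ip η η = 1 := by simp [ip, η, Pi.single_apply]
  let c0 := 2 * Real.pi^(lam+1) * 2^lam
  have hc0 : 0 < c0 := by positivity
  refine ⟨(sig m).real Set.univ / c0, by positivity, fun k z => ?_⟩
  let H : (Fin m → ℝ) → ℂ := fun x => (zL i0 i1 x)^k
  have hHn : ∀ ξ : Sph m, ‖H (WithLp.ofLp ξ.1)‖ ≤ 1 := fun ξ => by
    simp only [H, norm_pow]
    refine pow_le_one₀ (norm_nonneg _) ((zL_norm i0 i1 h01 _).trans (nrm_sph ξ).le)
  have hnη : nrm η = 1 := by rw [nrm, hη, Real.sqrt_one]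
  have hip : ∀ ξ : Sph m, |ip (WithLp.ofLp ξ.1) η| ≤ 1 := fun ξ => by
    have := abs_ip_le (WithLp.ofLp ξ.1) η
    rwa [nrm_sph, hnη, one_mul] at this
  let F : ℕ → Sph m → ℂ := fun n ξ =>
    ((Complex.I * z)^n / n.factorial) * (((ip (WithLp.ofLp ξ.1) η)^n) • H (WithLp.ofLp ξ.1))
  have hHc : Continuous H := (zH_hom i0 i1 k).sm.continuous
  have hFi : ∀ n, Integrable (F n) (sig m) := fun n => by
    refine sint_integrable (h := fun x => ((Complex.I * z)^n / n.factorial) * (((ip x η)^n) • H x)) ?_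
    have := continuous_ip_left η
    fun_prop
  have hFn : ∀ n ξ, ‖F n ξ‖ ≤ |z|^n / n.factorial := fun n ξ => by
    simp only [F, norm_mul, norm_div, norm_pow, norm_smul, Complex.norm_I, one_mul,
      Complex.norm_natCast, Complex.norm_real, Real.norm_eq_abs]
    have h1 : |ip (WithLp.ofLp ξ.1) η|^n * ‖H (WithLp.ofLp ξ.1)‖ ≤ 1 :=
      mul_le_one₀ (pow_le_one₀ (abs_nonneg _) (hip ξ)) (norm_nonneg _) (hHn ξ)
    exact mul_le_of_le_one_right (by positivity) h1
  have hsum : Summable fun n => ∫ ξ, ‖F n ξ‖ ∂(sig m) := by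
    refine Summable.of_nonneg_of_le (fun n => integral_nonneg fun _ => norm_nonneg _) (fun n => ?_)
      ((Real.summable_pow_div_factorial |z|).mul_left ((sig m).real Set.univ))
    have := integral_mono (hFi n).norm (integrable_const _) (hFn n)
    simpa using this
  have hs := hasSum_integral_of_summable_integral_norm hFi hsum
  have hval : ∀ n, ∫ ξ, F n ξ ∂(sig m) = ((Complex.I * z)^n / n.factorial) * (cs lam n k : ℂ) := by
    intro n
    have := sphere_funk hm η hη n k H (zH_hom i0 i1 k) (zH_harm i0 i1 h01 k)
    simp only [F]
    rw [integral_const_mul]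
    unfold sint at this
    rw [this]
    simp [H, zL_ap, η, Pi.single_apply, h01.symm, hlam]
  simp_rw [hval] at hs
  have hinj : Function.Injective (fun j : ℕ => k + 2*j) := fun a b h => by simpa using h
  have hs2 := (hinj.hasSum_iff (fun n hn => by
    rw [cs_zero, Complex.ofReal_zero, mul_zero]
    intro j hj; exact hn ⟨j, hj.symm⟩)).mpr hs
  have hj : HasSum (fun j => (Complex.I^k * c0 * z^k) * ((btm ((k:ℝ)+lam) z j : ℝ) : ℂ))
      ((Complex.I^k * c0 * z^k) * ((besselJt ((k:ℝ)+lam) z : ℝ) : ℂ)) := by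
    refine HasSum.mul_left _ ?_
    exact_mod_cast (summable_btm ((k:ℝ)+lam) z (by positivity)).hasSum
  have heq : ∀ j, (Complex.I^k * c0 * z^k) * ((btm ((k:ℝ)+lam) z j : ℝ) : ℂ)
      = ((Complex.I * z)^(k+2*j) / (k+2*j).factorial) * (cs lam (k+2*j) k : ℂ) := by
    intro j
    rw [cs_eq, btm]
    have hG : Real.Gamma ((k:ℝ)+j+lam+1) ≠ 0 := (Real.Gamma_pos_of_pos (by positivity)).ne'
    rw [show (j:ℝ) + (k+lam) + 1 = (k:ℝ)+j+lam+1 by ring]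
    have hp : (2:ℝ)^((k:ℝ)+lam) = 2^k * 2^lam := by
      rw [Real.rpow_add (by norm_num), Real.rpow_natCast]
    have h2 : (2:ℝ)^lam ≠ 0 := by positivity
    have hf : ((k+2*j).factorial:ℝ) ≠ 0 := by positivity
    have hr : c0 * z^k * ((-1)^j * (z/2)^(2*j) / (j.factorial * Real.Gamma ((k:ℝ)+j+lam+1) * 2^((k:ℝ)+lam)))
       = (-1)^j * z^(k+2*j) / ((k+2*j).factorial:ℝ) * (2 * Real.pi ^ (lam + 1) * ((k + 2 * j).factorial:ℝ) /
      (2 ^ (k + 2 * j) * j.factorial * Real.Gamma (k + j + lam + 1))) := by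
      rw [hp, pow_add, pow_add, div_pow]
      simp only [c0]
      field_simp
    have hI : Complex.I^(k+2*j) = Complex.I^k * (-1)^j := by
      rw [pow_add, pow_mul, Complex.I_sq]
    rw [mul_pow, hI, mul_assoc, mul_assoc, ← mul_assoc (c0:ℂ)]
    have hr' := congrArg (fun r : ℝ => (r:ℂ)) hr
    push_cast at hr' ⊢
    rw [hr']
    ring
  simp_rw [heq] at hj
  have hfin := hj.unique hs2
  have hn : ‖(Complex.I^k * c0 * z^k) * ((besselJt ((k:ℝ)+lam) z : ℝ) : ℂ)‖ = c0 * |jk lam k z| := by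
    simp only [norm_mul, norm_pow, Complex.norm_I, one_pow, one_mul, Complex.norm_real,
      Real.norm_eq_abs, abs_of_pos hc0, jk, abs_mul, abs_pow]
    ring
  rw [le_div_iff₀ hc0, mul_comm, ← hn, hfin]
  refine (norm_integral_le_of_norm_le_const (C := 1) (ae_of_all _ fun ξ => ?_)).trans (by simp)
  have hexp : ∑' n, F n ξ = Complex.exp (Complex.I * z * (ip (WithLp.ofLp ξ.1) η : ℝ)) * H (WithLp.ofLp ξ.1) := by
    rw [Complex.exp_eq_exp_ℂ, NormedSpace.exp_eq_tsum_div, ← tsum_mul_right]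
    refine tsum_congr fun n => ?_
    simp only [F, Complex.real_smul, Complex.ofReal_pow]
    rw [mul_pow (Complex.I * z)]; ring
  rw [hexp, norm_mul]
  have : ‖Complex.exp (Complex.I * z * (ip (WithLp.ofLp ξ.1) η : ℝ))‖ = 1 := by
    rw [show Complex.I * z * (ip (WithLp.ofLp ξ.1) η : ℝ) = ((z * ip (WithLp.ofLp ξ.1) η : ℝ) : ℂ) * Complex.I by
      push_cast; ring]
    exact Complex.norm_exp_ofReal_mul_I _
  rw [this, one_mul]
  exact hHn ξ

lemma jk_decay (hm : 2 ≤ m) (q : ℕ) : ∃ C : ℝ, 0 ≤ C ∧ ∀ (k:ℕ) (z:ℝ), 0 ≤ z →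
    ((k:ℝ)+1)^q * |jk (((m:ℝ)-2)/2) k z| ≤ C * (1+z)^q := by
  set lam := ((m:ℝ)-2)/2 with hlam
  have hl : 0 ≤ lam := by have : (2:ℝ) ≤ m := by exact_mod_cast hm
                          rw [hlam]; linarith
  obtain ⟨C0, hC0, h0⟩ := exists_jk_bound hm
  induction q with
  | zero => exact ⟨C0, hC0, fun k z _ => by simpa using h0 k z⟩
  | succ q ih =>
    obtain ⟨C, hC, h⟩ := ih
    refine ⟨C0 + (2^q+1)*C, by positivity, fun k z hz => ?_⟩
    have h1z : 1 ≤ (1+z)^(q+1) := one_le_pow₀ (by linarith)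
    rcases k with _ | k
    · have := h0 0 z
      simp only [Nat.cast_zero, zero_add, one_pow, one_mul]
      have h2 : C0 * 1 ≤ (C0 + (2^q+1)*C) * (1+z)^(q+1) := by
        gcongr
        have : 0 ≤ (2^q+1)*C := by positivity
        linarith
      linarith
    · have e := jk_rec lam hl k z
      have a1 : 2*((k:ℝ)+1+lam) * |jk lam (k+1) z| ≤ z * (|jk lam k z| + |jk lam (k+2) z|) := by
        have : 2*((k:ℝ)+1+lam) * |jk lam (k+1) z| = |2*((k:ℝ)+1+lam) * jk lam (k+1) z| := by
          rw [abs_mul, abs_of_nonneg (by positivity : 0 ≤ 2*((k:ℝ)+1+lam))]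
        rw [this, e, abs_mul, abs_of_nonneg hz]
        gcongr
        exact abs_add_le _ _
      have a2 : ((k:ℝ)+2)^q * |jk lam k z| ≤ 2^q * (C*(1+z)^q) := by
        calc ((k:ℝ)+2)^q * |jk lam k z| ≤ (2*((k:ℝ)+1))^q * |jk lam k z| := by
              gcongr; linarith [(Nat.cast_nonneg k : (0:ℝ) ≤ k)]
          _ = 2^q * (((k:ℝ)+1)^q * |jk lam k z|) := by rw [mul_pow]; ring
          _ ≤ _ := mul_le_mul_of_nonneg_left (h k z hz) (by positivity)
      have a3 : ((k:ℝ)+2)^q * |jk lam (k+2) z| ≤ C*(1+z)^q := by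
        refine le_trans ?_ (h (k+2) z hz)
        push_cast
        gcongr ?_ ^ q * _
        linarith
      calc (((k+1:ℕ):ℝ)+1)^(q+1) * |jk lam (k+1) z|
          = ((k:ℝ)+2)^q * (((k:ℝ)+2) * |jk lam (k+1) z|) := by push_cast; ring
        _ ≤ ((k:ℝ)+2)^q * (2*((k:ℝ)+1+lam) * |jk lam (k+1) z|) := by
            gcongr; linarith [(Nat.cast_nonneg k : (0:ℝ) ≤ k)]
        _ ≤ ((k:ℝ)+2)^q * (z * (|jk lam k z| + |jk lam (k+2) z|)) := by gcongr
        _ = z * (((k:ℝ)+2)^q * |jk lam k z| + ((k:ℝ)+2)^q * |jk lam (k+2) z|) := by ring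
        _ ≤ z * (2^q * (C*(1+z)^q) + C*(1+z)^q) := by gcongr
        _ = z * ((2^q+1)*C*(1+z)^q) := by ring
        _ ≤ (1+z) * ((C0 + (2^q+1)*C)*(1+z)^q) := by gcongr <;> linarith
        _ = _ := by ring

end BS

section MN
open scoped ContDiff

lemma cl_rsmul_mul (r : ℝ) (a b : Cl m) : (r • a) * b = r • (a * b) := by
  rw [rsmul_eq, rsmul_eq, cl_smul_mul]
lemma cl_mul_rsmul (r : ℝ) (a b : Cl m) : a * (r • b) = r • (a * b) := by
  rw [rsmul_eq, rsmul_eq, cl_mul_smul]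

/-- continuous multiplication -/
def mulCL (m : ℕ) : Cl m →L[ℝ] Cl m →L[ℝ] Cl m :=
  LinearMap.toContinuousLinearMap
    ((LinearMap.toContinuousLinearMap : (Cl m →ₗ[ℝ] Cl m) ≃ₗ[ℝ] _).toLinearMap ∘ₗ
      (LinearMap.mk₂ ℝ (fun a b : Cl m => a * b) cl_add_mul cl_rsmul_mul cl_mul_add
        (fun c a b => cl_mul_rsmul c a b)))

lemma mulCL_ap (a b : Cl m) : mulCL m a b = a * b := rfl

/-- vec as linear map -/
def vecL (m : ℕ) : (Fin m → ℝ) →L[ℝ] Cl m :=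
  LinearMap.toContinuousLinearMap
    { toFun := vec m
      map_add' := fun x y => by simp [vec, add_smul, Finset.sum_add_distrib]
      map_smul' := fun c x => by
        simp only [vec, Finset.smul_sum, rsmul_eq, smul_smul, RingHom.id_apply, Pi.smul_apply, smul_eq_mul]
        push_cast; rfl }

lemma vecL_ap (x : Fin m → ℝ) : vecL m x = vec m x := rfl

lemma vec_smul (c : ℝ) (x : Fin m → ℝ) : vec m (c • x) = c • vec m x := (vecL m).map_smul c x

lemma vec_single (i : Fin m) : vec m (Pi.single i 1) = e m i := by
  rw [vec, Finset.sum_eq_single i]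
  · simp
  · intro j _ hj; simp [Pi.single_apply, hj]
  · simp

lemma dirac_eq (f : (Fin m → ℝ) → Cl m) (x) : dirac f x = ∑ i, e m i * dd (Pi.single i 1) f x := rfl

lemma dd_mul_left (a : Cl m) {f : (Fin m → ℝ) → Cl m} (hf : Differentiable ℝ f) (v x : Fin m → ℝ) :
    dd v (fun x => a * f x) x = a * dd v f x := by
  have := ((mulCL m a).hasFDerivAt.comp x (hf x).hasFDerivAt).fderiv
  unfold dd
  erw [this]
  rfl

lemma harm_of_mono {l : ℕ} {M : (Fin m → ℝ) → Cl m} (hM : Hom l M) (h : ∀ x, dirac M x = 0) :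
    Harm M := by
  intro x
  have h1 : ∀ j : Fin m, ∑ i, e m i * dd (Pi.single j 1) (dd (Pi.single i 1) M) x = 0 := by
    intro j
    have e1 : (fun x => ∑ i, e m i * dd (Pi.single i 1) M x) = fun _ => 0 := funext h
    have e2 : dd (Pi.single j 1) (fun x => ∑ i, e m i * dd (Pi.single i 1) M x) x = 0 := by
      rw [e1]; simp [dd]
    rw [dd_finsum] at e2
    · rw [← e2]
      refine Finset.sum_congr rfl fun i _ => ?_
      rw [dd_mul_left _ (hM.dd _).diff]
    · intro i _
      exact (mulCL m (e m i)).differentiable.comp (hM.dd _).diff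
  have h2 : ∑ j, ∑ i, e m j * (e m i * dd (Pi.single j 1) (dd (Pi.single i 1) M) x) = 0 := by
    simp_rw [← cl_mul_sum, h1]
    have : ∀ i : Fin m, e m i * (0 : Cl m) = 0 := fun i => (mulCL m (e m i)).map_zero
    simp [this]
  rw [sum_sum_anti] at h2
  have h3 : ∀ i j : Fin m, (if i < j then
      e m i * (e m j * dd (Pi.single i 1) (dd (Pi.single j 1) M) x)
      + e m j * (e m i * dd (Pi.single j 1) (dd (Pi.single i 1) M) x) else 0) = 0 := by
    intro i j
    split_ifs with hij
    · rw [dd_comm hM.sm (Pi.single j 1), e_anti j i hij.ne']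
      simp
    · rfl
  simp_rw [h3, e_sq] at h2
  simpa using h2

lemma N_hom {l : ℕ} {M : (Fin m → ℝ) → Cl m} (hM : Hom l M) :
    Hom (l+1) (fun x => vec m x * M x) := by
  refine ⟨(mulCL m).isBoundedBilinearMap.contDiff.comp₂ (vecL m).contDiff hM.sm, fun c x => ?_⟩
  rw [vec_smul, hM.hom, cl_rsmul_mul, cl_mul_rsmul, smul_smul, pow_succ']

lemma dd_vec_mul {f : (Fin m → ℝ) → Cl m} (hf : Differentiable ℝ f) (v x : Fin m → ℝ) :
    dd v (fun x => vec m x * f x) x = vec m v * f x + vec m x * dd v f x := by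
  have := ((mulCL m).isBoundedBilinearMap.hasFDerivAt (vecL m x, f x)).comp x
    ((vecL m).hasFDerivAt.prodMk (hf x).hasFDerivAt)
  unfold dd
  erw [this.fderiv]
  simp [IsBoundedBilinearMap.deriv, mulCL_ap, vecL_ap, add_comm]

lemma N_harm {l : ℕ} {M : (Fin m → ℝ) → Cl m} (hM : Hom l M) (h : ∀ x, dirac M x = 0) :
    Harm (fun x => vec m x * M x) := by
  intro x
  have hh := harm_of_mono hM h x
  have e1 : ∀ v : Fin m → ℝ, dd v (dd v (fun x => vec m x * M x)) x
      = vec m v * dd v M x + (vec m v * dd v M x + vec m x * dd v (dd v M) x) := by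
    intro v
    rw [show dd v (fun x => vec m x * M x) = fun x => vec m v * M x + vec m x * dd v M x from
      funext fun x => dd_vec_mul hM.diff v x]
    rw [← dd_vec_mul (hM.dd v).diff, ← dd_mul_left _ hM.diff]
    unfold dd
    rw [fderiv_fun_add]
    · rfl
    · exact ((mulCL m (vec m v)).differentiable.comp hM.diff) x
    · exact (N_hom (hM.dd v)).diff x
  simp_rw [e1, vec_single]
  rw [Finset.sum_add_distrib, Finset.sum_add_distrib, ← cl_mul_sum, hh, ← dirac_eq, h]
  have h0 : vec m x * (0 : Cl m) = 0 := (mulCL m (vec m x)).map_zero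
  simp [h0]

end MN

section KE

/-- D_k -/
def D0 (lam : ℝ) (k : ℕ) (w : ℝ) : ℝ := geg (lam+1) k w
/-- D_{k-1} -/
def D1 (lam : ℝ) (k : ℕ) (w : ℝ) : ℝ := sh1 (fun j => geg (lam+1) j w) k
/-- D_{k-2} -/
def D2 (lam : ℝ) (k : ℕ) (w : ℝ) : ℝ := sh2 (fun j => geg (lam+1) j w) k

lemma continuous_D0 (lam : ℝ) (k : ℕ) : Continuous (D0 lam k) := continuous_geg _ _
lemma continuous_D1 (lam : ℝ) (k : ℕ) : Continuous (D1 lam k) := by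
  unfold D1 sh1; split_ifs
  · exact continuous_geg _ _
  · exact continuous_const
lemma continuous_D2 (lam : ℝ) (k : ℕ) : Continuous (D2 lam k) := by
  unfold D2 sh2; split_ifs
  · exact continuous_geg _ _
  · exact continuous_const

lemma D_bound (lam : ℝ) (hl : 0 ≤ lam) : ∃ q : ℕ, ∀ (k : ℕ) (w : ℝ), |w| ≤ 1 →
    |D0 lam k w| ≤ ((k:ℝ)+1)^q ∧ |D1 lam k w| ≤ ((k:ℝ)+1)^q ∧ |D2 lam k w| ≤ ((k:ℝ)+1)^q := by
  obtain ⟨q, hq⟩ := geg_bound (lam+1) (by positivity)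
  refine ⟨q, fun k w hw => ⟨hq k w hw, ?_, ?_⟩⟩
  · unfold D1 sh1
    split_ifs with h
    · refine (hq _ w hw).trans ?_
      gcongr
      omega
    · simp; positivity
  · unfold D2 sh2
    split_ifs with h
    · refine (hq _ w hw).trans ?_
      gcongr
      omega
    · simp; positivity

lemma summ_jk (hm : 2 ≤ m) (q : ℕ) (z : ℝ) (hz : 0 ≤ z) (c : ℝ) (f : ℕ → ℂ)
    (hf : ∀ k, ‖f k‖ ≤ c * ((k:ℝ)+1)^q) :
    Summable fun k => f k * ((jk (((m:ℝ)-2)/2) k z : ℝ) : ℂ) := by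
  obtain ⟨C, hC, h⟩ := jk_decay hm (q+2)
  have hs : Summable fun k : ℕ => (((k+1:ℕ):ℝ)^2)⁻¹ :=
    (summable_nat_add_iff 1).mpr (Real.summable_nat_pow_inv.mpr (by norm_num))
  have hc : 0 ≤ c := by simpa using (norm_nonneg _).trans (hf 0)
  refine Summable.of_norm_bounded (hs.mul_left (c * (C * (1+z)^(q+2)))) fun k => ?_
  have h1 := h k z hz
  rw [norm_mul, Complex.norm_real, Real.norm_eq_abs, ← div_eq_mul_inv, le_div_iff₀ (by positivity)]
  push_cast
  calc ‖f k‖ * |jk (((m:ℝ)-2)/2) k z| * ((k:ℝ)+1)^2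
      ≤ (c * ((k:ℝ)+1)^q) * |jk (((m:ℝ)-2)/2) k z| * ((k:ℝ)+1)^2 := by gcongr; exact hf k
    _ = c * (((k:ℝ)+1)^(q+2) * |jk (((m:ℝ)-2)/2) k z|) := by ring
    _ ≤ _ := mul_le_mul_of_nonneg_left h1 hc

/-- kernel prefactor -/
def kap (lam : ℝ) : ℝ := 2^lam * Real.Gamma (lam+1)

/-- terms of the kernel expansion -/
def Kt (u : ℂ) (lam : ℝ) (k : ℕ) (w z : ℝ) (a b : Cl m) : Cl m :=
  (kap lam * jk lam k z) •
    (((-1:ℂ)^k * (D0 lam k w : ℂ) + u * (D2 lam k w : ℂ)) • a + ((u + (-1:ℂ)^k) * (D1 lam k w : ℂ)) • b)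

lemma norm_pm (k : ℕ) : ‖(-1:ℂ)^k‖ = 1 := by simp

lemma kernel_hasSum (hm : 2 ≤ m) (x y : Fin m → ℝ) (hx : x ≠ 0) (hy : y ≠ 0) (a : Cl m) :
    HasSum (fun k => Kt (Complex.I^m) (((m:ℝ)-2)/2) k (ip ((nrm x)⁻¹ • x) ((nrm y)⁻¹ • y))
      (nrm x * nrm y) a (vec m ((nrm y)⁻¹ • y) * (vec m ((nrm x)⁻¹ • x) * a)))
      (Kminus m x y * a) := by
  set lam := ((m:ℝ)-2)/2 with hlam
  have hl : 0 ≤ lam := by have : (2:ℝ) ≤ m := by exact_mod_cast hm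
                          rw [hlam]; linarith
  have hnx := nrm_pos hx
  have hny := nrm_pos hy
  set z := nrm x * nrm y with hz
  have hzp : 0 < z := by positivity
  set w := ip x y / (nrm x * nrm y) with hw
  have hww : ip ((nrm x)⁻¹ • x) ((nrm y)⁻¹ • y) = w := by
    rw [ip_smul_left, ip_smul_right, hw]; field_simp
  have hw1 : |w| ≤ 1 := by
    rw [hw, abs_div, abs_of_pos hzp, div_le_one hzp]; exact abs_ip_le x y
  rw [hww]
  set u : ℂ := Complex.I^m with hu
  have hun : ‖u‖ = 1 := by simp [hu]
  obtain ⟨q, hq⟩ := D_bound lam hl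
  set b := vec m ((nrm y)⁻¹ • y) * (vec m ((nrm x)⁻¹ • x) * a) with hb
  have hwedge : wedge m x y * a = (-(z:ℂ)) • (b + (w:ℂ) • a) := by
    rw [vec_vec_wedge, hb, vec_smul, vec_smul, cl_rsmul_mul, cl_rsmul_mul, cl_mul_rsmul, smul_smul]
    have e1 : ip x y = z * w := by rw [hw, ← hz]; field_simp
    rw [e1, rsmul_eq, smul_add, smul_smul, smul_smul]
    have e2 : -(z:ℂ) * (((nrm y)⁻¹ * (nrm x)⁻¹ : ℝ) : ℂ) = -1 := by
      have : z * ((nrm y)⁻¹ * (nrm x)⁻¹) = 1 := by rw [hz]; field_simp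
      rw [neg_mul, ← Complex.ofReal_mul, this, Complex.ofReal_one]
    rw [e2]
    push_cast
    module
  have hus : ∀ k : ℕ, ‖u + (-1:ℂ)^k‖ ≤ 2 := fun k => (norm_add_le _ _).trans (by
    rw [hun, norm_pm]; norm_num)
  have hus' : ∀ k : ℕ, ‖u - (-1:ℂ)^k‖ ≤ 2 := fun k => (norm_sub_le _ _).trans (by
    rw [hun, norm_pm]; norm_num)
  have hgeg : ∀ k, geg lam k w = D0 lam k w - 2*w*D1 lam k w + D2 lam k w := fun k => geg_shift lam w k
  have hgegT : ∀ k, gegT lam k w = D0 lam k w - D2 lam k w := fun k => rfl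
  have sA : Summable fun k : ℕ => (u + (-1 : ℂ)^k) * ((z^k * besselJt ((k : ℝ) + lam) z * geg lam k w : ℝ) : ℂ) := by
    have := summ_jk hm q z hzp.le 8 (fun k => (u + (-1 : ℂ)^k) * (geg lam k w : ℂ)) (fun k => by
      rw [norm_mul, Complex.norm_real, Real.norm_eq_abs]
      have h1 : |geg lam k w| ≤ 4 * ((k:ℝ)+1)^q := by
        obtain ⟨h1, h2, h3⟩ := hq k w hw1
        rw [hgeg]
        have h4 : |2*w*D1 lam k w| ≤ 2 * ((k:ℝ)+1)^q := by
          rw [abs_mul, abs_mul, abs_two, mul_assoc]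
          have := mul_le_mul hw1 h2 (abs_nonneg _) zero_le_one
          linarith
        have h5 := abs_add_le (D0 lam k w - 2*w*D1 lam k w) (D2 lam k w)
        have h6 := abs_sub (D0 lam k w) (2*w*D1 lam k w)
        linarith
      have := mul_le_mul (hus k) h1 (abs_nonneg _) zero_le_two
      linarith)
    refine this.congr fun k => ?_
    rw [jk]; push_cast; ring
  have sB : Summable fun k : ℕ => (u - (-1 : ℂ)^k) * ((z^k * besselJt ((k : ℝ) + lam) z * gegT lam k w : ℝ) : ℂ) := by
    have := summ_jk hm q z hzp.le 8 (fun k => (u - (-1 : ℂ)^k) * (gegT lam k w : ℂ)) (fun k => by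
      rw [norm_mul, Complex.norm_real, Real.norm_eq_abs]
      have hp : 0 ≤ ((k:ℝ)+1)^q := by positivity
      have h1 : |gegT lam k w| ≤ 4 * ((k:ℝ)+1)^q := by
        obtain ⟨h1, h2, h3⟩ := hq k w hw1
        rw [hgegT]
        have h6 := abs_sub (D0 lam k w) (D2 lam k w)
        linarith
      have := mul_le_mul (hus' k) h1 (abs_nonneg _) zero_le_two
      linarith)
    refine this.congr fun k => ?_
    rw [jk]; push_cast; ring
  have hC1 : ∀ k : ℕ, (u + (-1 : ℂ)^k) *
      ((z^(k - 1) * besselJt ((k : ℝ) + lam) z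
        * (if 1 ≤ k then geg (lam + 1) (k - 1) w else 0) : ℝ) : ℂ) =
      (z:ℂ)⁻¹ * (((u + (-1 : ℂ)^k) * (D1 lam k w : ℂ)) * (jk lam k z : ℂ)) := by
    intro k
    have hzc : (z:ℂ) ≠ 0 := by exact_mod_cast hzp.ne'
    unfold D1 sh1 jk
    rcases k with _ | k
    · simp
    · simp only [Nat.add_sub_cancel, pow_succ z]
      push_cast
      field_simp
  have sC : Summable fun k : ℕ => (u + (-1 : ℂ)^k) *
      ((z^(k - 1) * besselJt ((k : ℝ) + lam) z
        * (if 1 ≤ k then geg (lam + 1) (k - 1) w else 0) : ℝ) : ℂ) := by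
    simp_rw [hC1]
    refine Summable.mul_left _ ?_
    refine summ_jk hm q z hzp.le 2 (fun k => (u + (-1 : ℂ)^k) * (D1 lam k w : ℂ)) (fun k => ?_)
    rw [norm_mul, Complex.norm_real, Real.norm_eq_abs]
    exact mul_le_mul (hus k) (hq k w hw1).2.1 (abs_nonneg _) zero_le_two
  have hA := sA.hasSum.mul_left (((2:ℝ)^(lam - 1) * Real.Gamma (lam + 1) : ℝ) : ℂ)
  have hB := sB.hasSum.mul_left (-(((2:ℝ)^(lam - 1) * Real.Gamma (lam + 1) : ℝ) : ℂ))
  have hC := sC.hasSum.mul_left (-(((2:ℝ)^lam * Real.Gamma (lam + 1) : ℝ) : ℂ))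
  have hall := ((hA.add hB).smul_const a).add (hC.smul_const (wedge m x y * a))
  have hK : Kminus m x y * a = (AfunR u lam w z + BfunR u lam w z) • a + CfunR u lam w z • (wedge m x y * a) := by
    rw [Kminus, cl_add_mul, cl_smul_mul, cl_smul_mul, cl_one_mul]
  rw [hK]
  have hall' : HasSum _ ((AfunR u lam w z + BfunR u lam w z) • a + CfunR u lam w z • (wedge m x y * a)) := hall
  refine Eq.mp (congrArg (fun F => HasSum F _) (funext fun k => ?_)) hall'
  symm
  have hzc : (z:ℂ) ≠ 0 := by exact_mod_cast hzp.ne'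
  have hp : (2:ℝ)^(lam-1) = 2^lam/2 := by rw [Real.rpow_sub (by norm_num), Real.rpow_one]
  have hj : ∀ t : ℝ, z^k * besselJt ((k:ℝ)+lam) z * t = jk lam k z * t := fun t => rfl
  rw [hC1, hwedge, hj, hj, hgeg, hgegT, hp, Kt, rsmul_eq, kap]
  rw [smul_smul, mul_neg, smul_add, smul_add, smul_smul, smul_smul, smul_smul]
  generalize (-1:ℂ)^k = s
  have c1 : ((2 ^ lam * Real.Gamma (lam + 1) * jk lam k z : ℝ) : ℂ) * ((u + s) * (D1 lam k w : ℂ))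
     = -(-((2 ^ lam * Real.Gamma (lam + 1) : ℝ) : ℂ) * ((z:ℂ)⁻¹ * ((u + s) * (D1 lam k w : ℂ) * (jk lam k z : ℂ))) * z) := by
    push_cast
    field_simp
  have c2 : ((2 ^ lam * Real.Gamma (lam + 1) * jk lam k z : ℝ) : ℂ) * (s * (D0 lam k w : ℂ) + u * (D2 lam k w : ℂ))
     = (((2 ^ lam / 2 * Real.Gamma (lam + 1) : ℝ) : ℂ) * ((u + s) * ((jk lam k z * (D0 lam k w - 2*w*D1 lam k w + D2 lam k w) : ℝ) : ℂ)) +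
       -((2 ^ lam / 2 * Real.Gamma (lam + 1) : ℝ) : ℂ) * ((u - s) * ((jk lam k z * (D0 lam k w - D2 lam k w) : ℝ) : ℂ)))
       + -(-((2 ^ lam * Real.Gamma (lam + 1) : ℝ) : ℂ) * ((z:ℂ)⁻¹ * ((u + s) * (D1 lam k w : ℂ) * (jk lam k z : ℂ))) * z) * w := by
    push_cast
    field_simp
    ring
  rw [c1, c2, add_smul]
  abel

end KE

section SS

lemma sint_D0 (hm : 2 ≤ m) (η : Fin m → ℝ) (hη : ip η η = 1)
    (l : ℕ) (H : (Fin m → ℝ) → Cl m) (hH : Hom l H) (hh : Harm H) (k : ℕ) :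
    sint (fun x => D0 (((m:ℝ)-2)/2) k (ip x η) • H x)
      = (sg0 (((m:ℝ)-2)/2) * TT k l) • H η := sint_geg hm η hη l H hH hh k

lemma sint_D1 (hm : 2 ≤ m) (η : Fin m → ℝ) (hη : ip η η = 1)
    (l : ℕ) (H : (Fin m → ℝ) → Cl m) (hH : Hom l H) (hh : Harm H) (k : ℕ) :
    sint (fun x => D1 (((m:ℝ)-2)/2) k (ip x η) • H x)
      = (sg0 (((m:ℝ)-2)/2) * sh1 (fun j => TT j l) k) • H η := by
  unfold D1 sh1
  split_ifs
  · exact sint_geg hm η hη l H hH hh (k-1)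
  · simp [sint]

lemma sint_D2 (hm : 2 ≤ m) (η : Fin m → ℝ) (hη : ip η η = 1)
    (l : ℕ) (H : (Fin m → ℝ) → Cl m) (hH : Hom l H) (hh : Harm H) (k : ℕ) :
    sint (fun x => D2 (((m:ℝ)-2)/2) k (ip x η) • H x)
      = (sg0 (((m:ℝ)-2)/2) * sh2 (fun j => TT j l) k) • H η := by
  unfold D2 sh2
  split_ifs
  · exact sint_geg hm η hη l H hH hh (k-2)
  · simp [sint]

/-- angular part -/
def SK (u : ℂ) (lam : ℝ) (k : ℕ) (η : Fin m → ℝ) (P : (Fin m → ℝ) → Cl m) (x : Fin m → ℝ) : Cl m :=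
  ((-1:ℂ)^k * (D0 lam k (ip x η) : ℂ) + u * (D2 lam k (ip x η) : ℂ)) • P x
    + ((u + (-1:ℂ)^k) * (D1 lam k (ip x η) : ℂ)) • (vec m η * (vec m x * P x))

lemma sint_SK (hm : 2 ≤ m) (η : Fin m → ℝ) (hη : ip η η = 1) (u : ℂ) (k : ℕ)
    (d d' : ℕ) (P Q : (Fin m → ℝ) → Cl m) (hP : Hom d P) (hP' : Harm P) (hQ : Hom d' Q) (hQ' : Harm Q)
    (ε : ℝ) (hPQ : ∀ x, ip x x = 1 → vec m x * P x = ε • Q x) :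
    sint (SK u (((m:ℝ)-2)/2) k η P) =
      ((sg0 (((m:ℝ)-2)/2) : ℂ) * ((-1:ℂ)^k * (TT k d : ℂ) + u * (sh2 (fun j => TT j d) k : ℂ)
        - (u + (-1:ℂ)^k) * (sh1 (fun j => TT j d') k : ℂ))) • P η := by
  set lam := ((m:ℝ)-2)/2 with hlam
  set L : Cl m →L[ℝ] Cl m := mulCL m (vec m η) with hL
  have h1 : sint (SK u lam k η P) = sint (fun x => (-1:ℂ)^k • (D0 lam k (ip x η) • P x)
      + u • (D2 lam k (ip x η) • P x) + ((u + (-1:ℂ)^k) * ε) • L (D1 lam k (ip x η) • Q x)) := by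
    unfold sint
    refine integral_congr_ae (Filter.Eventually.of_forall fun ξ => ?_)
    have hξ : ip (WithLp.ofLp ξ.1) (WithLp.ofLp ξ.1) = 1 := by rw [← nrm_sq, nrm_sph]; norm_num
    simp only [SK]
    rw [hPQ _ hξ, hL, mulCL_ap, cl_mul_rsmul, cl_mul_rsmul, rsmul_eq, rsmul_eq, rsmul_eq, rsmul_eq]
    module
  have c0 : Continuous fun x => D0 lam k (ip x η) • P x :=
    ((continuous_D0 lam k).comp (continuous_ip_left η)).smul hP.sm.continuous
  have c2 : Continuous fun x => D2 lam k (ip x η) • P x :=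
    ((continuous_D2 lam k).comp (continuous_ip_left η)).smul hP.sm.continuous
  have c1 : Continuous fun x => D1 lam k (ip x η) • Q x :=
    ((continuous_D1 lam k).comp (continuous_ip_left η)).smul hQ.sm.continuous
  have i0 := sint_integrable c0
  have i1 := sint_integrable c1
  have i2 := sint_integrable c2
  have s0 := sint_D0 hm η hη d P hP hP' k
  have s1 := sint_D1 hm η hη d' Q hQ hQ' k
  have s2 := sint_D2 hm η hη d P hP hP' k
  rw [← hlam] at s0 s1 s2
  rw [h1]
  unfold sint at s0 s1 s2 ⊢
  beta_reduce
  rw [integral_add ((i0.fun_smul ((-1:ℂ)^k)).fun_add (i2.fun_smul u))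
      ((L.integrable_comp i1).fun_smul ((u + (-1:ℂ)^k) * ε)),
    integral_add (i0.fun_smul ((-1:ℂ)^k)) (i2.fun_smul u), integral_smul, integral_smul, integral_smul,
    L.integral_comp_comm i1, s0, s1, s2, L.map_smul, hL, mulCL_ap]
  have hq : (ε:ℂ) • (vec m η * Q η) = - P η := by
    rw [← rsmul_eq, ← cl_mul_rsmul, ← hPQ η hη, vec_sq, hη]; simp
  rw [rsmul_eq, rsmul_eq, rsmul_eq]
  have : ((u + (-1:ℂ)^k) * ε) • (((sg0 lam * sh1 (fun j => TT j d') k : ℝ) : ℂ) • (vec m η * Q η))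
      = (-(u + (-1:ℂ)^k) * ((sg0 lam * sh1 (fun j => TT j d') k : ℝ) : ℂ)) • P η := by
    rw [smul_smul, show ((u + (-1:ℂ)^k) * ε) * ((sg0 lam * sh1 (fun j => TT j d') k : ℝ) : ℂ)
      = ((u + (-1:ℂ)^k) * ((sg0 lam * sh1 (fun j => TT j d') k : ℝ) : ℂ)) * ε by ring, mul_smul, hq]
    module
  rw [this]
  push_cast
  module

lemma T_one (k l : ℕ) : sh1 (fun j => TT j (l+1)) k = sh2 (fun j => TT j l) k := by
  rcases k with _ | _ | k
  · simp [sh1, sh2]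
  · simp [sh1, sh2, TT]
  · simp only [sh1, sh2]
    rw [if_pos (by omega), if_pos (by omega)]
    exact TT_ss k l

lemma T_two (k l : ℕ) : TT k l = sh2 (fun j => TT j l) k + if k = l then 1 else 0 := by
  rcases k with _ | _ | k
  · by_cases h : l = 0
    · simp [sh2, TT, h]
    · simp [sh2, TT, h, Ne.symm h]
  · rcases l with _ | _ | l <;> simp [sh2, TT]
  · simp only [sh2]
    rw [if_pos (by omega)]
    have := TT_s2 k l
    simp only [eq_comm (a := l)] at this
    exact this

lemma T_three (k l : ℕ) : sh1 (fun j => TT j l) k = TT k (l+1) := by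
  rcases k with _ | k
  · simp [sh1, TT]
  · simp only [sh1]
    rw [if_pos (by omega)]
    exact (TT_ss k l).symm

lemma sint_M (hm : 2 ≤ m) (η : Fin m → ℝ) (hη : ip η η = 1) (u : ℂ) (k : ℕ)
    (l : ℕ) (M : (Fin m → ℝ) → Cl m) (hM : Hom l M) (h : ∀ x, dirac M x = 0) :
    sint (SK u (((m:ℝ)-2)/2) k η M) =
      if k = l then ((sg0 (((m:ℝ)-2)/2) : ℂ) * (-1:ℂ)^l) • M η else 0 := by
  rw [sint_SK hm η hη u k l (l+1) M (fun x => vec m x * M x) hM (harm_of_mono hM h) (N_hom hM)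
    (N_harm hM h) 1 (fun x _ => (one_smul _ _).symm), T_one, T_two k l]
  split_ifs with hk
  · subst hk
    congr 2
    push_cast; ring
  · simp only [add_zero]
    rw [show ∀ s t : ℂ, (s * t + u * t - (u + s) * t) = 0 by intros; ring]
    simp

lemma sint_N (hm : 2 ≤ m) (η : Fin m → ℝ) (hη : ip η η = 1) (u : ℂ) (k : ℕ)
    (l : ℕ) (M : (Fin m → ℝ) → Cl m) (hM : Hom l M) (h : ∀ x, dirac M x = 0) :
    sint (SK u (((m:ℝ)-2)/2) k η (fun x => vec m x * M x)) =
      if k = l+1 then ((sg0 (((m:ℝ)-2)/2) : ℂ) * (-u)) • (vec m η * M η) else 0 := by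
  rw [sint_SK hm η hη u k (l+1) l (fun x => vec m x * M x) M (N_hom hM) (N_harm hM h) hM
    (harm_of_mono hM h) (-1) (fun x hx => by rw [vec_sq, hx]; simp), T_three, T_two k (l+1)]
  split_ifs with hk
  · congr 2
    push_cast; ring
  · simp only [add_zero]
    rw [show ∀ s t : ℂ, (s * t + u * t - (u + s) * t) = 0 by intros; ring]
    simp

end SS

section CORE

lemma nrm_unit_le (x : Fin m → ℝ) : nrm ((nrm x)⁻¹ • x) ≤ 1 := by
  rw [nrm_smul, abs_of_nonneg (inv_nonneg.mpr (nrm_nonneg x))]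
  exact inv_mul_le_one

lemma vec_bound (m : ℕ) : ∃ B : ℝ, 0 ≤ B ∧ ∀ (x : Fin m → ℝ) (a : Cl m), ‖vec m x * a‖ ≤ B * nrm x * ‖a‖ := by
  obtain ⟨C, hC, h⟩ := (mulCL m).isBoundedBilinearMap.bound
  refine ⟨C * ‖vecL m‖, by positivity, fun x a => ?_⟩
  have h1 : ‖vecL m x‖ ≤ ‖vecL m‖ * nrm x :=
    ((vecL m).le_opNorm x).trans (mul_le_mul_of_nonneg_left (norm_le_nrm x) (norm_nonneg _))
  refine (h (vecL m x) a).trans ?_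
  calc
    C * ‖vecL m x‖ * ‖a‖ ≤ C * (‖vecL m‖ * nrm x) * ‖a‖ := by gcongr
    _ = C * ‖vecL m‖ * nrm x * ‖a‖ := by ring

lemma vec_bound_unit (m : ℕ) : ∃ B : ℝ, 0 ≤ B ∧ ∀ (x y : Fin m → ℝ) (a : Cl m),
    ‖vec m ((nrm y)⁻¹ • y) * (vec m ((nrm x)⁻¹ • x) * a)‖ ≤ B * ‖a‖ := by
  obtain ⟨B, hB, h⟩ := vec_bound m
  have h1 : ∀ (x : Fin m → ℝ) (a : Cl m), ‖vec m ((nrm x)⁻¹ • x) * a‖ ≤ B * ‖a‖ := fun x a => by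
    refine (h _ a).trans ?_
    have := mul_le_mul_of_nonneg_left (nrm_unit_le x) hB
    rw [mul_one] at this
    exact mul_le_mul_of_nonneg_right this (norm_nonneg _)
  refine ⟨B*B, by positivity, fun x y a => (h1 _ _).trans ?_⟩
  rw [mul_assoc]
  exact mul_le_mul_of_nonneg_left (h1 _ _) hB

lemma Kt_bound (hm : 2 ≤ m) (y : Fin m → ℝ) :
    ∃ (C : ℝ) (p : ℕ), 0 ≤ C ∧ ∀ (k : ℕ) (x : Fin m → ℝ) (a : Cl m),
    ‖Kt (Complex.I^m) (((m:ℝ)-2)/2) k (ip ((nrm x)⁻¹ • x) ((nrm y)⁻¹ • y))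
      (nrm x * nrm y) a (vec m ((nrm y)⁻¹ • y) * (vec m ((nrm x)⁻¹ • x) * a))‖
     ≤ (((k+1:ℕ):ℝ)^2)⁻¹ * (C * ((1 + nrm x)^p * ‖a‖)) := by
  set lam := ((m:ℝ)-2)/2 with hlam
  have hl : 0 ≤ lam := by have : (2:ℝ) ≤ m := by exact_mod_cast hm
                          rw [hlam]; linarith
  obtain ⟨q, hq⟩ := D_bound lam hl
  obtain ⟨B, hB, hBb⟩ := vec_bound_unit m
  obtain ⟨C, hC, hj⟩ := jk_decay hm (q+2)
  have hny := nrm_nonneg y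
  refine ⟨|kap lam| * C * (1 + nrm y)^(q+2) * (2 + 2 * B), q+2, by positivity, fun k x a => ?_⟩
  set b := vec m ((nrm y)⁻¹ • y) * (vec m ((nrm x)⁻¹ • x) * a) with hb
  have hba : ‖b‖ ≤ B * ‖a‖ := hBb x y a
  have hnx := nrm_nonneg x
  set w := ip ((nrm x)⁻¹ • x) ((nrm y)⁻¹ • y) with hw
  have hw1 : |w| ≤ 1 := (abs_ip_le _ _).trans (mul_le_one₀ (nrm_unit_le x) (nrm_nonneg _) (nrm_unit_le y))
  obtain ⟨d0, d1, d2⟩ := hq k w hw1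
  have hun : ‖(Complex.I^m : ℂ)‖ = 1 := by simp
  set u : ℂ := Complex.I^m
  have n1 : ‖(-1:ℂ)^k * (D0 lam k w : ℂ) + u * (D2 lam k w : ℂ)‖ ≤ 2 * ((k:ℝ)+1)^q := by
    refine (norm_add_le _ _).trans ?_
    rw [norm_mul, norm_mul, norm_pm, hun, Complex.norm_real, Complex.norm_real, Real.norm_eq_abs, Real.norm_eq_abs]
    linarith
  have n2 : ‖(u + (-1:ℂ)^k) * (D1 lam k w : ℂ)‖ ≤ 2 * ((k:ℝ)+1)^q := by
    rw [norm_mul, Complex.norm_real, Real.norm_eq_abs]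
    refine mul_le_mul ((norm_add_le _ _).trans ?_) d1 (abs_nonneg _) zero_le_two
    rw [hun, norm_pm]; norm_num
  have n3 : ‖((-1:ℂ)^k * (D0 lam k w : ℂ) + u * (D2 lam k w : ℂ)) • a + ((u + (-1:ℂ)^k) * (D1 lam k w : ℂ)) • b‖
      ≤ ((k:ℝ)+1)^q * ((2 + 2*B) * ‖a‖) := by
    refine (norm_add_le _ _).trans ?_
    rw [norm_smul, norm_smul]
    have := mul_le_mul n1 le_rfl (norm_nonneg a) (by positivity)
    have := mul_le_mul n2 hba (norm_nonneg b) (by positivity)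
    linarith
  have n4 : |jk lam k (nrm x * nrm y)| * ((k:ℝ)+1)^(q+2) ≤ C * ((1+nrm y)^(q+2) * (1+nrm x)^(q+2)) := by
    have := hj k (nrm x * nrm y) (by positivity)
    rw [mul_comm]
    refine this.trans (mul_le_mul_of_nonneg_left ?_ hC)
    rw [← mul_pow]
    refine pow_le_pow_left₀ (by positivity) ?_ _
    nlinarith
  rw [Kt, norm_smul, Real.norm_eq_abs, abs_mul, inv_mul_eq_div, le_div_iff₀ (by positivity)]
  push_cast
  calc
    _ ≤ |kap lam| * |jk lam k (nrm x * nrm y)| * (((k:ℝ)+1)^q * ((2 + 2*B) * ‖a‖)) * ((k:ℝ)+1)^2 := by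
      gcongr
    _ = |kap lam| * ((2 + 2*B) * ‖a‖) * (|jk lam k (nrm x * nrm y)| * ((k:ℝ)+1)^(q+2)) := by ring
    _ ≤ |kap lam| * ((2 + 2*B) * ‖a‖) * (C * ((1+nrm y)^(q+2) * (1+nrm x)^(q+2))) :=
      mul_le_mul_of_nonneg_left n4 (by positivity)
    _ = _ := by ring

lemma Kt_meas (hm : 2 ≤ m) (y : Fin m → ℝ) (a : (Fin m → ℝ) → Cl m) (ha : AEStronglyMeasurable a) (k : ℕ) :
    AEStronglyMeasurable (fun x => Kt (Complex.I^m) (((m:ℝ)-2)/2) k (ip ((nrm x)⁻¹ • x) ((nrm y)⁻¹ • y))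
      (nrm x * nrm y) (a x) (vec m ((nrm y)⁻¹ • y) * (vec m ((nrm x)⁻¹ • x) * a x))) := by
  set lam := ((m:ℝ)-2)/2 with hlam
  have hl : 0 ≤ lam := by have : (2:ℝ) ≤ m := by exact_mod_cast hm
                          rw [hlam]; linarith
  have hξ : AEStronglyMeasurable (fun x : Fin m → ℝ => (nrm x)⁻¹ • x) :=
    (continuous_nrm.measurable.inv.aestronglyMeasurable).smul continuous_id.aestronglyMeasurable
  have hw : AEStronglyMeasurable (fun x : Fin m → ℝ => ip ((nrm x)⁻¹ • x) ((nrm y)⁻¹ • y)) :=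
    (continuous_ip_left _).comp_aestronglyMeasurable hξ
  have hD : ∀ f : ℝ → ℝ, Continuous f →
      AEStronglyMeasurable (fun x : Fin m → ℝ => ((f (ip ((nrm x)⁻¹ • x) ((nrm y)⁻¹ • y)) : ℝ) : ℂ)) :=
    fun f hf => (Complex.continuous_ofReal.comp hf).comp_aestronglyMeasurable hw
  have hb : AEStronglyMeasurable (fun x => vec m ((nrm y)⁻¹ • y) * (vec m ((nrm x)⁻¹ • x) * a x)) :=
    (mulCL m).aestronglyMeasurable_comp₂ aestronglyMeasurable_const
      ((mulCL m).aestronglyMeasurable_comp₂ ((vecL m).continuous.comp_aestronglyMeasurable hξ) ha)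
  have hjm : AEStronglyMeasurable (fun x : Fin m → ℝ => kap lam * jk lam k (nrm x * nrm y)) :=
    (((measurable_jk lam hl k).comp (continuous_nrm.measurable.mul_const _)).const_mul _).aestronglyMeasurable
  unfold Kt
  exact hjm.smul (((((hD _ (continuous_D0 lam k)).const_mul _).add ((hD _ (continuous_D2 lam k)).const_mul _)).smul ha).add
    (((hD _ (continuous_D1 lam k)).const_mul _).smul hb))

lemma core1 (hm : 2 ≤ m) (y : Fin m → ℝ) (hy : y ≠ 0) (a : (Fin m → ℝ) → Cl m)
    (ha : AEStronglyMeasurable a) (hi : ∀ p : ℕ, Integrable (fun x => (1 + nrm x)^p * ‖a x‖)) :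
    HasSum (fun k => ∫ x, Kt (Complex.I^m) (((m:ℝ)-2)/2) k (ip ((nrm x)⁻¹ • x) ((nrm y)⁻¹ • y))
      (nrm x * nrm y) (a x) (vec m ((nrm y)⁻¹ • y) * (vec m ((nrm x)⁻¹ • x) * a x)))
      (∫ x, Kminus m x y * a x) := by
  obtain ⟨C, p, hC, hb⟩ := Kt_bound hm y
  have hb1 : ∀ k, Integrable (fun x : Fin m → ℝ => (((k+1:ℕ):ℝ)^2)⁻¹ * (C * ((1 + nrm x)^p * ‖a x‖))) :=
    fun k => ((hi p).const_mul C).const_mul _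
  have hint : ∀ k, Integrable (fun x => Kt (Complex.I^m) (((m:ℝ)-2)/2) k (ip ((nrm x)⁻¹ • x) ((nrm y)⁻¹ • y))
      (nrm x * nrm y) (a x) (vec m ((nrm y)⁻¹ • y) * (vec m ((nrm x)⁻¹ • x) * a x))) := fun k =>
    (hb1 k).mono' (Kt_meas hm y a ha k) (Filter.Eventually.of_forall fun x => hb k x (a x))
  have hs : Summable fun k : ℕ => (((k+1:ℕ):ℝ)^2)⁻¹ :=
    (summable_nat_add_iff 1).mpr (Real.summable_nat_pow_inv.mpr (by norm_num))
  have h := hasSum_integral_of_summable_integral_norm hint (Summable.of_nonneg_of_le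
    (fun k => integral_nonneg fun x => norm_nonneg _)
    (fun k => (integral_mono (hint k).norm (hb1 k) (fun x => hb k x (a x))).trans_eq
      (integral_const_mul _ _)) (hs.mul_right _))
  have e : ∫ x, Kminus m x y * a x = ∫ x, ∑' k, Kt (Complex.I^m) (((m:ℝ)-2)/2) k (ip ((nrm x)⁻¹ • x) ((nrm y)⁻¹ • y))
      (nrm x * nrm y) (a x) (vec m ((nrm y)⁻¹ • y) * (vec m ((nrm x)⁻¹ • x) * a x)) := by
    refine integral_congr_ae ?_
    filter_upwards [ae_ne_zero hm] with x hx
    exact (kernel_hasSum hm x y hx hy (a x)).tsum_eq.symm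
  rw [e]
  exact h

lemma core2 (hm : 2 ≤ m) (y : Fin m → ℝ) (u : ℂ) (lam : ℝ) (k : ℕ) (f₀ : ℝ → ℝ) (d : ℕ)
    (P : (Fin m → ℝ) → Cl m) (hP : Hom d P) (η : Fin m → ℝ) :
    ∫ x, Kt u lam k (ip ((nrm x)⁻¹ • x) η) (nrm x * nrm y) (f₀ (nrm x) • P x)
        (vec m η * (vec m ((nrm x)⁻¹ • x) * (f₀ (nrm x) • P x)))
      = (∫ r in Set.Ioi (0:ℝ), r^(m-1) * (f₀ r * r^d * (kap lam * jk lam k (r * nrm y)))) •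
        sint (SK u lam k η P) := by
  rw [← polar hm]
  refine integral_congr_ae ?_
  filter_upwards [ae_ne_zero hm] with x hx
  have hn := nrm_pos hx
  have hx1 : P x = (nrm x)^d • P ((nrm x)⁻¹ • x) := by
    rw [← hP.hom, smul_smul, mul_inv_cancel₀ hn.ne', one_smul]
  rw [hx1, smul_smul]
  simp only [Kt, SK]
  rw [cl_mul_rsmul, cl_mul_rsmul]
  simp only [rsmul_eq, smul_add, smul_smul]
  push_cast
  congr 2 <;> ring

lemma core (hm : 2 ≤ m) (y : Fin m → ℝ) (hy : y ≠ 0) (f₀ : ℝ → ℝ) (d : ℕ)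
    (P : (Fin m → ℝ) → Cl m) (hP : Hom d P)
    (ha : AEStronglyMeasurable (fun x => f₀ (nrm x) • P x))
    (hi : ∀ p : ℕ, Integrable (fun x => (1 + nrm x)^p * ‖f₀ (nrm x) • P x‖)) (v : Cl m)
    (hv : ∀ k, sint (SK (Complex.I^m) (((m:ℝ)-2)/2) k ((nrm y)⁻¹ • y) P) = if k = d then v else 0) :
    ∫ x, Kminus m x y * (f₀ (nrm x) • P x) =
      (kap (((m:ℝ)-2)/2) * ∫ r in Set.Ioi (0:ℝ), r^(m-1) * r^d * f₀ r * ((r * nrm y) ^ (-(((m:ℝ) - 2)/2)) *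
              besselJ ((d:ℝ) + ((m:ℝ) - 2)/2) (r * nrm y))) • v := by
  have h := core1 hm y hy _ ha hi
  simp_rw [core2 hm y _ _ _ f₀ d P hP, hv] at h
  have h2 := hasSum_ite_eq d ((∫ r in Set.Ioi (0:ℝ), r^(m-1) *
    (f₀ r * r^d * (kap (((m:ℝ)-2)/2) * jk (((m:ℝ)-2)/2) d (r * nrm y)))) • v)
  have h3 := h.unique (Eq.mp (congrArg (fun F => HasSum F _) (funext fun k => ?_)) h2)
  · rw [h3, ← integral_const_mul]
    congr 1
    refine setIntegral_congr_fun measurableSet_Ioi fun r hr => ?_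
    have hr' : (0:ℝ) < r := hr
    rw [jk_bessel _ _ _ (mul_pos hr' (nrm_pos hy))]
    ring
  · split_ifs with hk
    · rw [hk]
    · simp

lemma const_one (hm : 2 ≤ m) :
    (2*Real.pi) ^ (-(m:ℝ)/2) * kap (((m:ℝ)-2)/2) * sg0 (((m:ℝ)-2)/2) = 1 := by
  have h2 : (2:ℝ) ≤ m := by exact_mod_cast hm
  have hG : 0 < Real.Gamma (((m:ℝ)-2)/2+1) := Real.Gamma_pos_of_pos (by linarith)
  rw [kap, sg0, Real.mul_rpow (by norm_num) Real.pi_pos.le]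
  have e1 : (2:ℝ)^(((m:ℝ)-2)/2) = 2^((m:ℝ)/2) / 2 := by
    rw [show ((m:ℝ)-2)/2 = (m:ℝ)/2 - 1 by ring, Real.rpow_sub (by norm_num), Real.rpow_one]
  have e2 : ((m:ℝ)-2)/2 + 1 = (m:ℝ)/2 := by ring
  have e3 : -(m:ℝ)/2 = -((m:ℝ)/2) := by ring
  rw [e2] at hG
  rw [e1, e2, e3, Real.rpow_neg (by norm_num), Real.rpow_neg Real.pi_pos.le]
  have := Real.pi_pos
  field_simp

lemma nrm_le_norm (x : Fin m → ℝ) : nrm x ≤ m * ‖x‖ := by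
  have h1 : ip x x ≤ (m * ‖x‖)^2 := by
    unfold ip
    have : ∀ i ∈ Finset.univ, x i * x i ≤ ‖x‖^2 := fun i _ => by
      have := norm_le_pi_norm x i
      rw [← sq, ← sq_abs, ← Real.norm_eq_abs]
      gcongr
    refine (Finset.sum_le_card_nsmul _ _ _ this).trans ?_
    simp only [Finset.card_univ, Fintype.card_fin, nsmul_eq_mul]
    rw [mul_pow]
    have : (m:ℝ) ≤ (m:ℝ)^2 := by exact_mod_cast Nat.le_self_pow two_ne_zero m
    gcongr
  rw [nrm]
  exact Real.sqrt_le_iff.mpr ⟨by positivity, h1⟩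

lemma schwartz_int (φ : SchwartzMap (Fin m → ℝ) (Cl m)) (p : ℕ) :
    Integrable (fun x => (1 + nrm x)^p * ‖φ x‖) := by
  have h0 := φ.integrable_pow_mul volume 0
  have hp := φ.integrable_pow_mul volume p
  have hsum : Integrable (fun x => 2^(p-1) * (‖x‖^0 * ‖φ x‖ + (m:ℝ)^p * (‖x‖^p * ‖φ x‖))) :=
    (h0.add (hp.const_mul ((m:ℝ)^p))).const_mul (2^(p-1))
  refine hsum.mono' ?_ (Filter.Eventually.of_forall fun x => ?_)
  · exact (((continuous_const.add continuous_nrm).pow p).mul φ.continuous.norm).aestronglyMeasurable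
  · have hn := nrm_nonneg x
    rw [Real.norm_eq_abs, abs_of_nonneg (by positivity)]
    have h1 := add_pow_le zero_le_one hn p
    have h2 : nrm x^p ≤ (m:ℝ)^p * ‖x‖^p := by
      rw [← mul_pow]; exact pow_le_pow_left₀ hn (nrm_le_norm x) p
    rw [one_pow] at h1
    have h3 : (1 + nrm x)^p ≤ 2^(p-1) * (1 + (m:ℝ)^p * ‖x‖^p) :=
      h1.trans (mul_le_mul_of_nonneg_left (by linarith) (by positivity))
    refine (mul_le_mul_of_nonneg_right h3 (norm_nonneg (φ x))).trans_eq ?_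
    ring

lemma schwartz_int2 (φ : SchwartzMap (Fin m → ℝ) (Cl m)) (p : ℕ) :
    Integrable (fun x => (1 + nrm x)^p * ‖vec m x * φ x‖) := by
  obtain ⟨B, hB, h⟩ := vec_bound m
  refine ((schwartz_int φ (p+1)).const_mul B).mono' ?_ (Filter.Eventually.of_forall fun x => ?_)
  · have : Continuous fun x => vec m x * φ x :=
      (mulCL m).continuous₂.comp₂ (vecL m).continuous φ.continuous
    exact (((continuous_const.add continuous_nrm).pow p).mul this.norm).aestronglyMeasurable
  · have hn := nrm_nonneg x
    rw [Real.norm_eq_abs, abs_of_nonneg (by positivity)]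
    calc
      (1 + nrm x)^p * ‖vec m x * φ x‖ ≤ (1 + nrm x)^p * (B * (1 + nrm x) * ‖φ x‖) := by
        refine mul_le_mul_of_nonneg_left ((h x (φ x)).trans ?_) (by positivity)
        gcongr
        linarith
      _ = _ := by ring

end CORE

/-- For a spherical monogenic `M_ℓ` of degree `ℓ` (a smooth, degree-`ℓ` homogeneous,
Clifford-algebra-valued function in the kernel of the Dirac operator) and a radial
profile `f₀` with `f₀(|x|)M_ℓ(x)` Schwartz, the Clifford-Fourier transform acts as a
Hankel-type transform:
`F_-(f₀(r)M_ℓ)(y) = (-1)^ℓ M_ℓ(η) ∫₀^∞ r^{m+ℓ-1} f₀(r) z^{-λ} J_{ℓ+λ}(z) dr` and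
`F_-(f₀(r) x M_ℓ)(y) = -i^m η M_ℓ(η) ∫₀^∞ r^{m+ℓ} f₀(r) z^{-λ} J_{ℓ+1+λ}(z) dr`,
with `η = y/|y|`, `z = r|y|`, `λ = (m-2)/2`. -/
theorem clifford_fourier_spherical_monogenic (m : ℕ) (hm : 2 ≤ m) (ℓ : ℕ)
    (M : (Fin m → ℝ) → Cl m) (hM : ContDiff ℝ ⊤ M)
    (hhom : ∀ (c : ℝ) (x : Fin m → ℝ), M (c • x) = c^ℓ • M x)
    (hmono : ∀ x, dirac M x = 0)
    (f₀ : ℝ → ℝ)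
    (hf : ∃ φ : SchwartzMap (Fin m → ℝ) (Cl m), ∀ x, φ x = f₀ (nrm x) • M x)
    (y : Fin m → ℝ) (hy : y ≠ 0) :
    ((2*Real.pi) ^ (-(m:ℝ)/2)) • (∫ x : Fin m → ℝ, Kminus m x y * (f₀ (nrm x) • M x))
      = ((-1 : ℝ)^ℓ *
          ∫ r in Set.Ioi (0:ℝ), (r^(m + ℓ - 1) * f₀ r *
            ((r * nrm y) ^ (-(((m:ℝ) - 2)/2)) *
              besselJ ((ℓ:ℝ) + ((m:ℝ) - 2)/2) (r * nrm y)))) • M ((nrm y)⁻¹ • y) ∧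
    ((2*Real.pi) ^ (-(m:ℝ)/2)) •
        (∫ x : Fin m → ℝ, Kminus m x y * (f₀ (nrm x) • (vec m x * M x)))
      = (-(Complex.I^m) *
          ((∫ r in Set.Ioi (0:ℝ), (r^(m + ℓ) * f₀ r *
            ((r * nrm y) ^ (-(((m:ℝ) - 2)/2)) *
              besselJ ((ℓ:ℝ) + 1 + ((m:ℝ) - 2)/2) (r * nrm y))) : ℝ) : ℂ)) •
          (vec m ((nrm y)⁻¹ • y) * M ((nrm y)⁻¹ • y)) := by
  obtain ⟨φ, hφ⟩ := hf
  have hH : Hom ℓ M := ⟨hM.of_le le_top, hhom⟩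
  have hη : ip ((nrm y)⁻¹ • y) ((nrm y)⁻¹ • y) = 1 := by
    have := nrm_pos hy
    rw [ip_smul_left, ip_smul_right, ← nrm_sq]
    field_simp
  have hφ' : (φ : (Fin m → ℝ) → Cl m) = fun x => f₀ (nrm x) • M x := funext hφ
  have hψ : (fun x => vec m x * φ x) = fun x => f₀ (nrm x) • (vec m x * M x) := by
    funext x; rw [hφ, cl_mul_rsmul]
  have hc := const_one hm
  constructor
  · rw [core hm y hy f₀ ℓ M hH (hφ' ▸ φ.continuous.aestronglyMeasurable)
      (fun p => by simpa only [hφ] using schwartz_int φ p) _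
      (fun k => sint_M hm _ hη _ k ℓ M hH hmono)]
    have e : ∀ r : ℝ, r^(m-1) * r^ℓ = r^(m+ℓ-1) := fun r => by
      rw [← pow_add]; congr 1; omega
    simp_rw [e]
    generalize (∫ r in Set.Ioi (0:ℝ), (r^(m + ℓ - 1) * f₀ r *
            ((r * nrm y) ^ (-(((m:ℝ) - 2)/2)) *
              besselJ ((ℓ:ℝ) + ((m:ℝ) - 2)/2) (r * nrm y)))) = X
    rw [rsmul_eq, rsmul_eq, rsmul_eq, smul_smul, smul_smul]
    congr 1
    have hc' := congrArg (fun t : ℝ => (t:ℂ)) hc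
    push_cast at hc' ⊢
    linear_combination (X * (-1:ℂ)^ℓ) * hc'
  · rw [core hm y hy f₀ (ℓ+1) (fun x => vec m x * M x) (N_hom hH)
      (hψ ▸ ((mulCL m).continuous₂.comp₂ (vecL m).continuous φ.continuous).aestronglyMeasurable)
      (fun p => by simpa only [hφ, cl_mul_rsmul] using schwartz_int2 φ p) _
      (fun k => sint_N hm _ hη _ k ℓ M hH hmono)]
    have e : ∀ r : ℝ, r^(m-1) * r^(ℓ+1) = r^(m+ℓ) := fun r => by
      rw [← pow_add]; congr 1; omega
    simp_rw [e]
    rw [Nat.cast_add, Nat.cast_one]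
    generalize (∫ r in Set.Ioi (0:ℝ), (r^(m + ℓ) * f₀ r *
            ((r * nrm y) ^ (-(((m:ℝ) - 2)/2)) *
              besselJ ((ℓ:ℝ) + 1 + ((m:ℝ) - 2)/2) (r * nrm y)))) = X
    rw [rsmul_eq, rsmul_eq, smul_smul, smul_smul]
    congr 1
    have hc' := congrArg (fun t : ℝ => (t:ℂ)) hc
    push_cast at hc' ⊢
    linear_combination (-X * Complex.I^m) * hc'

end CliffordFourier
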